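/- For every α > 0 and every decorated tree τ there exists a nonnegative real exponent γ(τ), depending only on τ and α and equal to 0 when w(τ) < 1+α, such that for every seed tree S of size k ≥ 2: E[F_τ(T_n^S)] ≈ n^{max{1, w(τ)/(1+α)}} · (log n)^{γ(τ)} as n → ∞. -/

import Mathlib

/-!
Why the first moments have these asymptotics. In a tree, the embeddings of a connected `τ` are the
same as the injective homomorphisms (`mono_adj`), so `F_τ(T)` is a finite sum of products of
descending factorials over injective homomorphisms (`msum`). When a vertex is attached to `T`, this
sum changes in two ways: the degree of the attachment vertex grows, which acts on the descending
factorials, and new homomorphisms appear that send a loose leaf of `τ` to the new vertex. Averaging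
over the attachment vertex gives the generator identity `generator_msum`. With
`Z = (1 + α) n - 2` and `w = w(τ)` it turns into a linear recursion for `E_n = E[F_τ(T_n)]`,

  `E_(n+1) = (1 + w / Z) E_n + H_n / Z`,

where the forcing term `H_n` is a combination with nonnegative coefficients, not all zero, of
expectations of `F_σ` for decorated trees `σ` obtained from `τ` by lowering a decoration, by removing
a loose leaf, or both. Such `σ` have weight at most `w` (`lw_lower_le`, `lw_red_le`), and a smaller
value of the number of vertices plus the total decoration, so one can argue by induction
(`forcing_tame`, `mainClaim_step`). The induction starts with the undecorated trees having one or two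
vertices, for which `F_τ` is `n` or `2 n - 2`.

The homogeneous solution grows like `n ^ (w / (1 + α))`, and the forcing term, by induction, like
`n ^ β (log n) ^ g` with `1 ≤ β ≤ max 1 (w / (1 + α))`. Three regimes occur.
* If `w < 1 + α`, then `β = 1`, `g = 0`, and the forcing produces linear growth (`recur_linear`).
* If `w ≥ 1 + α` and `β < w / (1 + α)`, the homogeneous solution dominates (`recur_homogeneous`).
* If `w ≥ 1 + α` and `β = w / (1 + α)`, resonance adds one power of `log n` (`recur_resonant`).

The exponent `g` never depends on the seed, since the regime is decided by `τ` and `α` alone.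
-/

open MeasureTheory Filter Asymptotics

noncomputable section

namespace AffinePA

instance (V : Type*) : MeasurableSpace (SimpleGraph V) := ⊤

/-- The degree of a vertex. -/
def degR {V : Type*} (G : SimpleGraph V) (v : V) : ℕ := Nat.card {w // G.Adj v w}

/-- The tree on `n+1` vertices obtained from `G` by attaching the new vertex to `u`. -/
def extendTree {n : ℕ} (G : SimpleGraph (Fin n)) (u : Fin n) : SimpleGraph (Fin (n + 1)) :=
  SimpleGraph.fromRel fun a b =>
    (∃ a' b' : Fin n, a = Fin.castSucc a' ∧ b = Fin.castSucc b' ∧ G.Adj a' b') ∨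
      (a = Fin.castSucc u ∧ b = Fin.last n)

/-- One step of the affine preferential attachment dynamics. -/
def stepMeasure (α : ℝ) {n : ℕ} (G : SimpleGraph (Fin n)) :
    Measure (SimpleGraph (Fin (n + 1))) :=
  ∑ u : Fin n,
    ENNReal.ofReal (((degR G u : ℝ) - 1 + α) / ((1 + α) * (n : ℝ) - 2)) •
      Measure.dirac (extendTree G u)

/-- The law of the α-PA tree with `m` added vertices, started from the seed `S`. -/
def paLaw (α : ℝ) {k : ℕ} (S : SimpleGraph (Fin k)) :
    (m : ℕ) → Measure (SimpleGraph (Fin (k + m)))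
  | 0 => Measure.dirac S
  | m + 1 => (paLaw α S m).bind (stepMeasure α)

/-- The weight `∏_u [deg_T(f u) - 1]_{ℓ u}` of a map `f`. -/
def embWeight {V W : Type*} [Fintype V] (T : SimpleGraph W) (ℓ : V → ℕ) (f : V → W) : ℝ :=
  ∏ u : V, ((degR T (f u) - 1).descFactorial (ℓ u) : ℝ)

/-- The observable `F_{(τ,ℓ)}(T)`. -/
def obsG {V W : Type*} [Fintype V] (τ : SimpleGraph V) (ℓ : V → ℕ) (T : SimpleGraph W) : ℝ :=
  ∑ᶠ φ : τ ↪g T, embWeight T ℓ ⇑φ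

/-- The weight `w(τ,ℓ)` of a decorated tree. -/
def weightG {V : Type*} [Fintype V] (τ : SimpleGraph V) (ℓ : V → ℕ) : ℕ :=
  if Fintype.card V ≤ 2 ∧ ∀ v, ℓ v = 0 then 1
  else (∑ v, ℓ v) + Nat.card {v // degR τ v = 1 ∧ ℓ v = 0}

/-- A decorated tree: a finite graph on `Fin n` with nonnegative integer decorations. -/
structure DecTree where
  n : ℕ
  tree : SimpleGraph (Fin n)
  dec : Fin n → ℕ

def DecTree.wt (τ : DecTree) : ℕ := weightG τ.tree τ.dec

def DecTree.decSum (τ : DecTree) : ℕ := ∑ v, τ.dec v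

def DecTree.obs (τ : DecTree) {W : Type*} (T : SimpleGraph W) : ℝ := obsG τ.tree τ.dec T

/-- The strict partial order `≺` on decorated trees. -/
def DecLt (σ τ : DecTree) : Prop :=
  (σ.wt < τ.wt ∧ σ.n ≤ τ.n) ∨ (σ.wt = τ.wt ∧ σ.n < τ.n) ∨
    (σ.wt = τ.wt ∧ σ.n = τ.n ∧ σ.decSum < τ.decSum)

open Classical in
/-- `F_{τ+τ}(T)`: sum over pairs of embeddings with overlapping images. -/
def obsOverlapG {V W : Type*} [Fintype V] (τ : SimpleGraph V) (ℓ : V → ℕ)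
    (T : SimpleGraph W) : ℝ :=
  ∑ᶠ (φ₁ : τ ↪g T) (φ₂ : τ ↪g T),
    if (Set.range ⇑φ₁ ∩ Set.range ⇑φ₂).Nonempty then
      embWeight T ℓ ⇑φ₁ * embWeight T ℓ ⇑φ₂
    else 0

open Classical in
/-- `F_{τ,σ}(T)`: sum over pairs of embeddings with disjoint images. -/
def obsDisjG {V₁ V₂ W : Type*} [Fintype V₁] [Fintype V₂] (τ : SimpleGraph V₁) (ℓτ : V₁ → ℕ)
    (σ : SimpleGraph V₂) (ℓσ : V₂ → ℕ) (T : SimpleGraph W) : ℝ :=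
  ∑ᶠ (φ₁ : τ ↪g T) (φ₂ : σ ↪g T),
    if Disjoint (Set.range ⇑φ₁) (Set.range ⇑φ₂) then
      embWeight T ℓτ ⇑φ₁ * embWeight T ℓσ ⇑φ₂
    else 0

/-- `f ≈ g` : same order of magnitude, eventually. -/
def asympEquiv (f g : ℕ → ℝ) : Prop :=
  ∃ C : ℝ, 0 < C ∧ ∀ᶠ n in atTop, f n ≤ C * g n ∧ g n ≤ C * f n

/-- Descending factorial `[x]_l` of a real number. -/
def descPoch (x : ℝ) (l : ℕ) : ℝ := ∏ i ∈ Finset.range l, (x - (i : ℝ))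

/-- Total variation distance between two measures. -/
def tvDist {X : Type*} [MeasurableSpace X] (μ ν : Measure X) : ℝ :=
  ⨆ s : {s : Set X // MeasurableSet s}, |(μ ↑s).toReal - (ν ↑s).toReal|

open Classical in
/-- The contribution to `F_τ` of embeddings whose image meets the seed. -/
def obsMeetSeed (k m : ℕ) {r : ℕ} (τ : SimpleGraph (Fin r)) (ℓ : Fin r → ℕ)
    (T : SimpleGraph (Fin (k + m))) : ℝ :=
  ∑ᶠ φ : τ ↪g T,
    if ∃ (x : Fin r) (y : Fin k), φ x = Fin.castAdd m y then embWeight T ℓ ⇑φ else 0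

/-- The contribution to `F_τ` of embeddings contained in the seed. -/
def obsInSeed (k m : ℕ) {r : ℕ} (τ : SimpleGraph (Fin r)) (ℓ : Fin r → ℕ)
    (S : SimpleGraph (Fin k)) (T : SimpleGraph (Fin (k + m))) : ℝ :=
  ∑ᶠ φ : τ ↪g S, embWeight T ℓ fun u => Fin.castAdd m (φ u)

/-- `D_{τ,d}(T)`: the number of perfect embeddings of `(τ,d)` in `T`. -/
def perfCount {V W : Type*} (τ : SimpleGraph V) (d : V → ℕ) (T : SimpleGraph W) : ℕ :=
  Nat.card {φ : τ ↪g T // ∀ u, degR T (φ u) = d u}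

/-- `τ` is `(T₁,T₂)`-blind. -/
def IsBlind {V W₁ W₂ : Type*} (τ : SimpleGraph V) (T₁ : SimpleGraph W₁)
    (T₂ : SimpleGraph W₂) : Prop :=
  ∀ d : V → ℕ, (∀ u, 1 ≤ d u) → perfCount τ d T₁ = perfCount τ d T₂

/-- `D_{σ,τ,d}(T)`: perfect embeddings of `(τ,d)` meeting the seed exactly in `φ(A)`. -/
def perfCountSeed (k m : ℕ) {r : ℕ} (τ : SimpleGraph (Fin r)) (A : Finset (Fin r))
    (d : Fin r → ℕ) (T : SimpleGraph (Fin (k + m))) : ℕ :=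
  Nat.card {φ : τ ↪g T //
    (∀ u, degR T (φ u) = d u) ∧ ∀ u : Fin r, (∃ y : Fin k, φ u = Fin.castAdd m y) ↔ u ∈ A}

/-- The σ-algebra generated by `T_0, …, T_m`. -/
def natFilt {Ω : Type*} [MeasurableSpace Ω] {k : ℕ}
    (T : (m : ℕ) → Ω → SimpleGraph (Fin (k + m))) (m : ℕ) : MeasurableSpace Ω :=
  ⨆ j ∈ Set.Iic m, MeasurableSpace.comap (T j) inferInstance

/-- `(T_m)` is an α-PA chain started from the seed `S`, on the probability space `(Ω,P)`. -/
structure IsPAChain (α : ℝ) {k : ℕ} (S : SimpleGraph (Fin k)) {Ω : Type*} [MeasurableSpace Ω]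
    (P : Measure Ω) (T : (m : ℕ) → Ω → SimpleGraph (Fin (k + m))) : Prop where
  isProb : IsProbabilityMeasure P
  meas : ∀ m, Measurable (T m)
  init : ∀ᵐ ω ∂P, T 0 ω = S
  step : ∀ (m : ℕ) (f : SimpleGraph (Fin (k + (m + 1))) → ℝ),
    P[(fun ω => f (T (m + 1) ω))|natFilt T m] =ᵐ[P]
      fun ω => ∫ G, f G ∂stepMeasure α (T m ω)

/-- The natural filtration of the chain. -/
def natFiltration {Ω : Type*} [mΩ : MeasurableSpace Ω] {k : ℕ}
    (T : (m : ℕ) → Ω → SimpleGraph (Fin (k + m))) (hT : ∀ m, Measurable (T m)) :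
    Filtration ℕ mΩ where
  seq := natFilt T
  mono' _ _ hij := biSup_mono fun _ hx => le_trans hx hij
  le' _ := iSup_le fun l => iSup_le fun _ => (hT l).comap_le

/-- Isomorphism of simple graphs as a setoid. -/
def isoSetoid (n : ℕ) : Setoid (SimpleGraph (Fin n)) where
  r G H := Nonempty (G ≃g H)
  iseqv := ⟨fun G => ⟨RelIso.refl G.Adj⟩, fun ⟨e⟩ => ⟨e.symm⟩, fun ⟨e⟩ ⟨f⟩ => ⟨e.trans f⟩⟩

/-- Isomorphism classes of graphs on `n` vertices. -/
def IsoClass (n : ℕ) : Type := Quotient (isoSetoid n)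

instance (n : ℕ) : MeasurableSpace (IsoClass n) := ⊤

/-- The law of the isomorphism class of the α-PA tree with `n` vertices grown from `S`. -/
def isoClassLaw (α : ℝ) {k : ℕ} (S : SimpleGraph (Fin k)) (n : ℕ) : Measure (IsoClass n) :=
  if h : k ≤ n then
    (paLaw α S (n - k)).map fun G =>
      Quotient.mk (isoSetoid n) (G.map (finCongr (Nat.add_sub_cancel' h)).toEmbedding)
  else 0

/-! ### The one-step kernel and the recursion for expectations -/

instance {V : Type*} : DiscreteMeasurableSpace (SimpleGraph V) := ⟨fun _ => trivial⟩

lemma integral_stepMeasure (α : ℝ) {n : ℕ} (G : SimpleGraph (Fin n))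
    (f : SimpleGraph (Fin (n + 1)) → ℝ) :
    ∫ H, f H ∂stepMeasure α G =
      ∑ u : Fin n, (ENNReal.ofReal (((degR G u : ℝ) - 1 + α) / ((1 + α) * (n : ℝ) - 2))).toReal *
        f (extendTree G u) := by
  classical
  unfold stepMeasure
  rw [integral_finsetSum_measure]
  · refine Finset.sum_congr rfl fun u _ => ?_
    rw [integral_smul_measure, integral_dirac, smul_eq_mul]
  · intro u _
    have : IsFiniteMeasure (ENNReal.ofReal (((degR G u : ℝ) - 1 + α) / ((1 + α) * (n : ℝ) - 2)) •
      Measure.dirac (extendTree G u)) := Measure.smul_finite _ ENNReal.ofReal_ne_top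
    exact Integrable.of_finite

lemma isFiniteMeasure_stepMeasure (α : ℝ) {n : ℕ} (G : SimpleGraph (Fin n)) :
    IsFiniteMeasure (stepMeasure α G) := by
  constructor
  unfold stepMeasure
  rw [Measure.finsetSum_apply]
  refine ENNReal.sum_lt_top.2 fun u _ => ?_
  simp

/-- Graphs carry the discrete σ-algebra, so the one-step kernel is trivially measurable. -/
lemma measurable_stepMeasure (α : ℝ) {n : ℕ} :
    Measurable (stepMeasure α : SimpleGraph (Fin n) → _) := measurable_from_top

/-- Expectation of an observable after one step, on a finite state space. -/
lemma integral_bind_finite {X Y : Type*} [Finite X] [Finite Y] [MeasurableSpace X]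
    [MeasurableSpace Y] [DiscreteMeasurableSpace X] [DiscreteMeasurableSpace Y]
    (μ : Measure X) [IsFiniteMeasure μ] (κ : X → Measure Y) (hκ : ∀ x, IsFiniteMeasure (κ x))
    (hb : IsFiniteMeasure (μ.bind κ)) (f : Y → ℝ) :
    ∫ y, f y ∂(μ.bind κ) = ∫ x, ∫ y, f y ∂κ x ∂μ := by
  classical
  have := Fintype.ofFinite X
  have := Fintype.ofFinite Y
  have hmeas : Measurable κ := Measurable.of_discrete
  rw [integral_fintype Integrable.of_finite, integral_fintype Integrable.of_finite]
  have h1 : ∀ y, (μ.bind κ).real {y} = ∑ x, (κ x).real {y} * μ.real {x} := by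
    intro y
    rw [measureReal_def, Measure.bind_apply (MeasurableSet.singleton y) hmeas.aemeasurable,
      lintegral_fintype, ENNReal.toReal_sum]
    · simp [measureReal_def]
    · intro x _
      exact ENNReal.mul_ne_top (measure_ne_top _ _) (measure_ne_top _ _)
  have h2 : ∀ x, ∫ y, f y ∂κ x = ∑ y, (κ x).real {y} * f y := by
    intro x
    rw [integral_fintype Integrable.of_finite]; rfl
  simp only [h1, h2, smul_eq_mul, Finset.sum_mul, Finset.mul_sum]
  rw [Finset.sum_comm]
  refine Finset.sum_congr rfl fun x _ => Finset.sum_congr rfl fun y _ => ?_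
  ring

lemma degR_eq_degree {V : Type*} [Fintype V] (G : SimpleGraph V) [DecidableRel G.Adj] (v : V) :
    degR G v = G.degree v := by
  classical
  rw [degR, Nat.card_eq_fintype_card, ← G.card_neighborSet_eq_degree]
  rfl

lemma one_le_degR {V : Type*} [Fintype V] {G : SimpleGraph V} (hG : G.Connected)
    (hn : 2 ≤ Fintype.card V) (v : V) : 1 ≤ degR G v := by
  classical
  have : Nontrivial V := Fintype.one_lt_card_iff_nontrivial.1 hn
  rw [degR_eq_degree]
  exact hG.preconnected.degree_pos_of_nontrivial v

lemma sum_degR {V : Type*} [Fintype V] {G : SimpleGraph V} (hG : G.IsTree) :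
    ∑ v, (degR G v : ℝ) = 2 * (Fintype.card V : ℝ) - 2 := by
  classical
  have h1 := G.sum_degrees_eq_twice_card_edges
  have h2 := hG.card_edgeFinset
  simp only [degR_eq_degree]
  rw [← Nat.cast_sum, h1, ← h2]
  push_cast; ring

lemma extend_adj_castSucc {n : ℕ} (G : SimpleGraph (Fin n)) (u a b : Fin n) :
    (extendTree G u).Adj a.castSucc b.castSucc ↔ G.Adj a b := by
  simp only [extendTree, SimpleGraph.fromRel_adj]
  constructor
  · rintro ⟨_, (⟨a', b', h1, h2, h⟩ | ⟨_, h⟩) | (⟨a', b', h1, h2, h⟩ | ⟨_, h⟩)⟩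
    · rw [Fin.castSucc_inj] at h1 h2; subst h1 h2; exact h
    · exact absurd h (Fin.castSucc_lt_last _).ne
    · rw [Fin.castSucc_inj] at h1 h2; subst h1 h2; exact h.symm
    · exact absurd h (Fin.castSucc_lt_last _).ne
  · intro h
    exact ⟨fun e => h.ne (Fin.castSucc_injective _ e), Or.inl (Or.inl ⟨a, b, rfl, rfl, h⟩)⟩

lemma extend_adj_last {n : ℕ} (G : SimpleGraph (Fin n)) (u a : Fin n) :
    (extendTree G u).Adj (Fin.last n) a.castSucc ↔ a = u := by
  simp only [extendTree, SimpleGraph.fromRel_adj]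
  constructor
  · rintro ⟨_, (⟨a', b', h1, h2, h⟩ | ⟨h, _⟩) | (⟨a', b', h1, h2, h⟩ | ⟨h, _⟩)⟩
    · exact absurd h1.symm (Fin.castSucc_lt_last _).ne
    · exact absurd h.symm (Fin.castSucc_lt_last _).ne
    · exact absurd h2.symm (Fin.castSucc_lt_last _).ne
    · exact Fin.castSucc_injective _ h
  · rintro rfl
    exact ⟨(Fin.castSucc_lt_last _).ne', Or.inr (Or.inr ⟨rfl, trivial⟩)⟩

open Classical in
lemma degR_extend_castSucc {n : ℕ} (G : SimpleGraph (Fin n)) (u a : Fin n) :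
    degR (extendTree G u) a.castSucc = degR G a + if a = u then 1 else 0 := by
  simp only [degR, Nat.card_eq_fintype_card, Fintype.card_subtype, Finset.card_filter]
  rw [Fin.sum_univ_castSucc]
  simp only [extend_adj_castSucc]
  congr 2
  rw [SimpleGraph.adj_comm, extend_adj_last]

open Classical in
lemma degR_extend_last {n : ℕ} (G : SimpleGraph (Fin n)) (u : Fin n) :
    degR (extendTree G u) (Fin.last n) = 1 := by
  simp only [degR, Nat.card_eq_fintype_card, Fintype.card_subtype, Finset.card_filter]
  rw [Fin.sum_univ_castSucc]
  simp [extend_adj_last]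

open Classical in
lemma isTree_extend {n : ℕ} {G : SimpleGraph (Fin n)} (hG : G.IsTree) (u : Fin n) :
    (extendTree G u).IsTree := by
  have hreach : ∀ a b : Fin n, (extendTree G u).Reachable a.castSucc b.castSucc := by
    intro a b
    obtain ⟨p⟩ := hG.connected.preconnected a b
    exact ⟨p.map ⟨Fin.castSucc, fun h => (extend_adj_castSucc G u _ _).2 h⟩⟩
  have hlast : (extendTree G u).Reachable (Fin.last n) u.castSucc :=
    ((extend_adj_last G u u).2 rfl).reachable
  have hconn : (extendTree G u).Connected := by
    have hu : ∀ a : Fin (n + 1), (extendTree G u).Reachable a u.castSucc := by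
      intro a
      induction a using Fin.lastCases with
      | last => exact hlast
      | cast a => exact hreach a u
    have : Nonempty (Fin (n + 1)) := ⟨0⟩
    exact ⟨fun a b => (hu a).trans (hu b).symm⟩
  rw [SimpleGraph.isTree_iff_connected_and_card]
  refine ⟨hconn, ?_⟩
  have h1 := (extendTree G u).sum_degrees_eq_twice_card_edges
  have h2 := sum_degR hG
  have h3 : ∑ v, ((extendTree G u).degree v : ℝ) = 2 * (n : ℝ) := by
    simp only [← degR_eq_degree]
    rw [Fin.sum_univ_castSucc]
    simp only [degR_extend_castSucc, degR_extend_last]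
    push_cast
    rw [Finset.sum_add_distrib, h2]
    simp
    ring
  rw [← Nat.cast_sum, h1] at h3
  have h4 : (extendTree G u).edgeFinset.card = n := by
    have : (2 * (extendTree G u).edgeFinset.card : ℝ) = 2 * n := by exact_mod_cast h3
    exact_mod_cast (mul_left_cancel₀ two_ne_zero this)
  rw [Nat.card_eq_fintype_card, Nat.card_eq_fintype_card, ← SimpleGraph.edgeFinset_card, h4]
  simp

lemma Zpos {α : ℝ} (hα : 0 < α) {n : ℕ} (hn : 2 ≤ n) : 0 < (1 + α) * (n : ℝ) - 2 := by
  have : (2 : ℝ) ≤ n := by exact_mod_cast hn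
  nlinarith

/-- The attachment weights of a tree add up to the normalising constant. -/
lemma sum_attach (α : ℝ) {n : ℕ} {G : SimpleGraph (Fin n)} (hG : G.IsTree) :
    ∑ u, ((degR G u : ℝ) - 1 + α) = (1 + α) * (n : ℝ) - 2 := by
  rw [Finset.sum_add_distrib, Finset.sum_sub_distrib, sum_degR hG]
  simp; ring

lemma attach_nonneg {α : ℝ} (hα : 0 < α) {n : ℕ} {G : SimpleGraph (Fin n)} (hG : G.IsTree)
    (hn : 2 ≤ n) (u : Fin n) : 0 ≤ (degR G u : ℝ) - 1 + α := by
  have : (1 : ℝ) ≤ degR G u := by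
    exact_mod_cast one_le_degR hG.connected (by simpa using hn) u
  linarith

lemma isProbabilityMeasure_step {α : ℝ} (hα : 0 < α) {n : ℕ} {G : SimpleGraph (Fin n)}
    (hG : G.IsTree) (hn : 2 ≤ n) : stepMeasure α G Set.univ = 1 := by
  unfold stepMeasure
  rw [Measure.finsetSum_apply]
  simp only [Measure.smul_apply, measure_univ, smul_eq_mul, mul_one]
  rw [← ENNReal.ofReal_sum_of_nonneg, ← Finset.sum_div, sum_attach α hG,
    div_self (Zpos hα hn).ne', ENNReal.ofReal_one]
  intro u _
  exact div_nonneg (attach_nonneg hα hG hn u) (Zpos hα hn).le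

/-- The law of the chain is a probability measure carried by trees. Both facts are proved together,
because `stepMeasure` has total mass one only at a tree. -/
lemma paLaw_props {α : ℝ} (hα : 0 < α) {k : ℕ} (hk : 2 ≤ k) {S : SimpleGraph (Fin k)}
    (hS : S.IsTree) (m : ℕ) :
    IsProbabilityMeasure (paLaw α S m) ∧ ∀ᵐ G ∂paLaw α S m, G.IsTree := by
  induction m with
  | zero =>
    refine ⟨by unfold paLaw; exact Measure.dirac.isProbabilityMeasure, ?_⟩
    unfold paLaw
    rw [ae_dirac_eq]
    exact hS
  | succ m ih =>
    obtain ⟨h1, h2⟩ := ih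
    change IsProbabilityMeasure ((paLaw α S m).bind (stepMeasure α)) ∧
      ∀ᵐ G ∂((paLaw α S m).bind (stepMeasure α)), G.IsTree
    constructor
    · constructor
      rw [Measure.bind_apply MeasurableSet.univ (measurable_stepMeasure α).aemeasurable]
      have : ∀ᵐ G ∂paLaw α S m, stepMeasure α G Set.univ = 1 := by
        filter_upwards [h2] with G hG
        exact isProbabilityMeasure_step hα hG (by omega)
      rw [lintegral_congr_ae this]
      simp
    · rw [ae_iff, Measure.bind_apply (MeasurableSet.of_discrete)
        (measurable_stepMeasure α).aemeasurable]
      have : ∀ᵐ G ∂paLaw α S m, stepMeasure α G {H | ¬ H.IsTree} = 0 := by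
        filter_upwards [h2] with G hG
        unfold stepMeasure
        rw [Measure.finsetSum_apply]
        refine Finset.sum_eq_zero fun u _ => ?_
        simp [isTree_extend hG u]
      rw [lintegral_congr_ae this]
      simp

/-- An observable defined on all graphs with vertex set `Fin n`, for all `n` at once. -/
abbrev Obs := (n : ℕ) → SimpleGraph (Fin n) → ℝ

/-- The expectation of an observable of the tree with `m` added vertices. -/
def expect (α : ℝ) (Φ : Obs) {k : ℕ} (S : SimpleGraph (Fin k)) (m : ℕ) : ℝ :=
  ∫ G, Φ (k + m) G ∂paLaw α S m

lemma expect_congr {α : ℝ} (hα : 0 < α) {k : ℕ} (hk : 2 ≤ k) {S : SimpleGraph (Fin k)}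
    (hS : S.IsTree) {Φ Ψ : Obs}
    (h : ∀ (n : ℕ) (G : SimpleGraph (Fin n)), 2 ≤ n → G.IsTree → Φ n G = Ψ n G) (m : ℕ) :
    expect α Φ S m = expect α Ψ S m := by
  refine integral_congr_ae ?_
  filter_upwards [(paLaw_props hα hk hS m).2] with G hG
  exact h _ G (by omega) hG

lemma expect_add {α : ℝ} (hα : 0 < α) {k : ℕ} (hk : 2 ≤ k) {S : SimpleGraph (Fin k)}
    (hS : S.IsTree) (Φ Ψ : Obs) (m : ℕ) :
    expect α (fun n G => Φ n G + Ψ n G) S m = expect α Φ S m + expect α Ψ S m := by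
  have := (paLaw_props hα hk hS m).1
  exact integral_add Integrable.of_finite Integrable.of_finite

lemma expect_smul {α : ℝ} {k : ℕ} {S : SimpleGraph (Fin k)} (c : ℝ) (Φ : Obs) (m : ℕ) :
    expect α (fun n G => c * Φ n G) S m = c * expect α Φ S m :=
  integral_const_mul _ _

lemma expect_nonneg {α : ℝ} {k : ℕ} {S : SimpleGraph (Fin k)} {Φ : Obs}
    (h : ∀ n G, 0 ≤ Φ n G) (m : ℕ) : 0 ≤ expect α Φ S m :=
  integral_nonneg fun G => h _ G

/-- An observable depending only on the number of vertices equals its expectation. -/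
lemma expect_const {α : ℝ} (hα : 0 < α) {k : ℕ} (hk : 2 ≤ k) {S : SimpleGraph (Fin k)}
    (hS : S.IsTree) {Φ : Obs} {g : ℕ → ℝ}
    (h : ∀ (n : ℕ) (G : SimpleGraph (Fin n)), 2 ≤ n → G.IsTree → Φ n G = g n) (m : ℕ) :
    expect α Φ S m = g (k + m) := by
  have := (paLaw_props hα hk hS m).1
  rw [expect_congr hα hk hS (Ψ := fun n _ => g n) h m]
  simp [expect]

/-- A one-step linear identity for observables turns into a recursion for expectations. -/
lemma expect_succ {α : ℝ} (hα : 0 < α) {k : ℕ} (hk : 2 ≤ k) {S : SimpleGraph (Fin k)}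
    (hS : S.IsTree) {Φ Ψ : Obs} {w : ℝ}
    (h : ∀ (n : ℕ) (G : SimpleGraph (Fin n)), 2 ≤ n → G.IsTree →
      ∑ u, ((degR G u : ℝ) - 1 + α) * Φ (n + 1) (extendTree G u) =
        ((1 + α) * (n : ℝ) - 2 + w) * Φ n G + Ψ n G) (m : ℕ) :
    expect α Φ S (m + 1) = (1 + w / ((1 + α) * ((k + m : ℕ) : ℝ) - 2)) * expect α Φ S m +
      expect α Ψ S m / ((1 + α) * ((k + m : ℕ) : ℝ) - 2) := by
  have h1 := (paLaw_props hα hk hS m).1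
  have h2 : IsProbabilityMeasure ((paLaw α S m).bind (stepMeasure α)) :=
    (paLaw_props hα hk hS (m + 1)).1
  have hZ := Zpos hα (show 2 ≤ k + m by omega)
  change ∫ G, Φ (k + m + 1) G ∂((paLaw α S m).bind (stepMeasure α)) = _
  rw [integral_bind_finite _ _ (isFiniteMeasure_stepMeasure α) inferInstance]
  have : ∀ᵐ G ∂paLaw α S m, ∫ H, Φ (k + m + 1) H ∂stepMeasure α G =
      (1 + w / ((1 + α) * ((k + m : ℕ) : ℝ) - 2)) * Φ (k + m) G +
        ((1 + α) * ((k + m : ℕ) : ℝ) - 2)⁻¹ * Ψ (k + m) G := by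
    filter_upwards [(paLaw_props hα hk hS m).2] with G hG
    rw [integral_stepMeasure]
    have h3 := h (k + m) G (by omega) hG
    have h4 : ∀ u : Fin (k + m),
        (ENNReal.ofReal (((degR G u : ℝ) - 1 + α) / ((1 + α) * ((k + m : ℕ) : ℝ) - 2))).toReal *
          Φ (k + m + 1) (extendTree G u) = ((1 + α) * ((k + m : ℕ) : ℝ) - 2)⁻¹ *
          (((degR G u : ℝ) - 1 + α) * Φ (k + m + 1) (extendTree G u)) := by
      intro u
      rw [ENNReal.toReal_ofReal (div_nonneg (attach_nonneg hα hG (by omega) u) hZ.le)]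
      field_simp
    rw [Finset.sum_congr rfl fun u _ => h4 u, ← Finset.mul_sum, h3]
    field_simp
  rw [integral_congr_ae this, integral_add Integrable.of_finite Integrable.of_finite,
    integral_const_mul, integral_const_mul]
  unfold expect
  ring

/-! ### Asymptotics of linear recursions with forcing -/

/-- The growth scale `x ^ β (log x) ^ g` at `x = k + m`. -/
def scale (β : ℝ) (g k m : ℕ) : ℝ :=
  ((k + m : ℕ) : ℝ) ^ β * Real.log ((k + m : ℕ) : ℝ) ^ g

lemma scale_nonneg (β : ℝ) (g k m : ℕ) : 0 ≤ scale β g k m :=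
  mul_nonneg (Real.rpow_nonneg (Nat.cast_nonneg _) _)
    (pow_nonneg (Real.log_natCast_nonneg _) _)

lemma tendsto_size (k : ℕ) : Tendsto (fun m : ℕ => ((k + m : ℕ) : ℝ)) atTop atTop := by
  refine tendsto_natCast_atTop_atTop.comp ?_
  exact (tendsto_add_atTop_nat k).congr fun m => add_comm m k

lemma eventually_size_ge (k : ℕ) (c : ℝ) : ∀ᶠ m : ℕ in atTop, c ≤ ((k + m : ℕ) : ℝ) :=
  (tendsto_size k).eventually_ge_atTop c

lemma eventually_log_ge_one (k : ℕ) : ∀ᶠ m : ℕ in atTop, 1 ≤ Real.log ((k + m : ℕ) : ℝ) :=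
  (Real.tendsto_log_atTop.comp (tendsto_size k)).eventually_ge_atTop 1

/-- A smaller exponent beats any power of the logarithm. -/
lemma scale_lt {β β' : ℝ} (h : β' < β) (g' : ℕ) (k : ℕ) :
    ∀ᶠ m in atTop, scale β' g' k m ≤ ((k + m : ℕ) : ℝ) ^ β := by
  have h1 := (isLittleO_log_rpow_rpow_atTop (g' : ℝ) (sub_pos.2 h)).bound one_pos
  filter_upwards [(tendsto_size k).eventually h1, eventually_size_ge k 1,
    eventually_log_ge_one k] with m hm h2 h3
  have h0 : (0 : ℝ) < ((k + m : ℕ) : ℝ) := by linarith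
  rw [Real.rpow_natCast, Real.norm_of_nonneg (by positivity), one_mul,
    Real.norm_of_nonneg (by positivity)] at hm
  calc scale β' g' k m ≤ ((k + m : ℕ) : ℝ) ^ β' * ((k + m : ℕ) : ℝ) ^ (β - β') := by
        unfold scale; gcongr
    _ = _ := by rw [← Real.rpow_add h0]; congr 1; ring

/-- Scales are totally preordered lexicographically. -/
lemma scale_le {β β' : ℝ} {g g' : ℕ} (h : β' < β ∨ (β' = β ∧ g' ≤ g)) (k : ℕ) :
    ∀ᶠ m in atTop, scale β' g' k m ≤ scale β g k m := by
  rcases h with h | ⟨rfl, h⟩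
  · filter_upwards [scale_lt h g' k, eventually_log_ge_one k] with m h1 h2
    refine h1.trans ?_
    exact le_mul_of_one_le_right (by positivity) (one_le_pow₀ h2)
  · filter_upwards [eventually_log_ge_one k] with m h2
    unfold scale
    gcongr

lemma asympEquiv_add {f f' φ φ' : ℕ → ℝ} (h : asympEquiv f φ) (h' : asympEquiv f' φ')
    (hφ' : ∀ m, 0 ≤ φ' m) (hle : ∀ᶠ m in atTop, φ' m ≤ φ m) :
    asympEquiv (fun m => f m + f' m) φ := by
  obtain ⟨C, hC, h⟩ := h
  obtain ⟨C', hC', h'⟩ := h'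
  refine ⟨C + C', by positivity, ?_⟩
  filter_upwards [h, h', hle] with m h1 h2 h3
  have h4 := hφ' m
  have h5 : 0 ≤ f' m := by
    by_contra hc
    push Not at hc
    nlinarith [h2.2]
  constructor
  · nlinarith [h1.1, h2.1]
  · have : 0 ≤ f m := by
      by_contra hc
      push Not at hc
      nlinarith [h1.2]
    nlinarith [h1.2]

lemma asympEquiv_smul {f φ : ℕ → ℝ} (h : asympEquiv f φ) {c : ℝ} (hc : 0 < c)
    (hφ : ∀ m, 0 ≤ φ m) : asympEquiv (fun m => c * f m) φ := by
  obtain ⟨C, hC, h⟩ := h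
  refine ⟨C * c + C * c⁻¹, by positivity, ?_⟩
  filter_upwards [h] with m h1
  have h4 := hφ m
  have h5 : 0 ≤ f m := by
    by_contra hc
    push Not at hc
    nlinarith [h1.2]
  constructor
  · have : 0 ≤ C * c⁻¹ * φ m := by positivity
    nlinarith [h1.1]
  · have e : (C * c + C * c⁻¹) * (c * f m) = C * c * c * f m + C * f m := by
      field_simp
    rw [e]
    have : 0 ≤ C * c * c * f m := by positivity
    linarith [h1.2]

lemma asympEquiv_trans_const {f φ ψ : ℕ → ℝ} {c C : ℝ} (hc : 0 < c) (hC : 0 < C)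
    (h1 : ∀ᶠ m in atTop, f m ≤ C * φ m) (h2 : ∀ᶠ m in atTop, c * φ m ≤ f m)
    (hφ : ∀ m, 0 ≤ φ m) (e : ∀ m, φ m = ψ m) : asympEquiv f ψ := by
  refine ⟨C + c⁻¹, by positivity, ?_⟩
  filter_upwards [h1, h2] with m h1 h2
  have h4 := hφ m
  rw [← e m]
  constructor
  · have : 0 ≤ c⁻¹ * φ m := by positivity
    linarith
  · have h5 : 0 ≤ f m := le_trans (by positivity) h2
    have h6 : φ m ≤ c⁻¹ * f m := by
      rw [inv_mul_eq_div, le_div_iff₀ hc]; linarith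
    have : 0 ≤ C * f m := by positivity
    linarith

/-- `y ^ a` is a supersolution of `f(y + 1) = (1 + a / y) f(y)`. -/
lemma hom_upper {a y : ℝ} (ha : 1 ≤ a) (hy : 0 < y) : (1 + a / y) * y ^ a ≤ (y + 1) ^ a := by
  have h := one_add_mul_self_le_rpow_one_add (s := 1 / y)
    (by have : 0 < 1 / y := by positivity
        linarith) ha
  have e : y + 1 = (1 + 1 / y) * y := by field_simp
  rw [e, Real.mul_rpow (by positivity) hy.le]
  have e2 : 1 + a / y = 1 + a * (1 / y) := by ring
  rw [e2]
  gcongr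

/-- `(y + a - 1) ^ a` is a subsolution of `f(y + 1) = (1 + a / y) f(y)`. -/
lemma hom_lower {a y : ℝ} (ha : 1 ≤ a) (hy : 0 < y) :
    (y + a) ^ a ≤ (1 + a / y) * (y + a - 1) ^ a := by
  have hya : 0 < y + a := by linarith
  have h0 : 1 / (y + a) ≤ 1 := by rw [div_le_one hya]; linarith
  have h := one_add_mul_self_le_rpow_one_add (s := -(1 / (y + a))) (by linarith) ha
  have e : y + a - 1 = (1 + -(1 / (y + a))) * (y + a) := by field_simp; ring
  rw [e, Real.mul_rpow (by linarith) hya.le, ← mul_assoc]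
  refine le_mul_of_one_le_left (by positivity) ?_
  calc (1 : ℝ) = (1 + a / y) * (1 + a * -(1 / (y + a))) := by field_simp; ring
    _ ≤ _ := by gcongr

/-- The recursion satisfied by first moments, with forcing term `h`. -/
structure Recur (α w : ℝ) (k : ℕ) (f h : ℕ → ℝ) : Prop where
  nonneg : ∀ m, 0 ≤ f m
  step : ∀ m, f (m + 1) = (1 + w / ((1 + α) * ((k + m : ℕ) : ℝ) - 2)) * f m +
    h m / ((1 + α) * ((k + m : ℕ) : ℝ) - 2)

section
variable {α w : ℝ} {k : ℕ} {f h : ℕ → ℝ}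

lemma size_succ (k m : ℕ) : ((k + (m + 1) : ℕ) : ℝ) = ((k + m : ℕ) : ℝ) + 1 := by
  push_cast; ring

/-- A forcing term of linear order and a homogeneous growth exponent below `1` give linear growth. -/
lemma recur_linear (hα : 0 < α) (hw : 0 ≤ w) (R : Recur α w k f h) (hw1 : w < 1 + α)
    (hh : asympEquiv h (scale 1 0 k)) : asympEquiv f (scale 1 0 k) := by
  obtain ⟨C, hC, hh⟩ := hh
  simp only [scale, Real.rpow_one, pow_zero, mul_one] at hh
  set δ := 1 + α - w with hδ
  have hδ0 : 0 < δ := by rw [hδ]; linarith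
  obtain ⟨M, hM⟩ := eventually_atTop.1
    (hh.and ((eventually_size_ge k (4 / δ)).and (eventually_size_ge k 2)))
  have hZ : ∀ m, M ≤ m → 0 < (1 + α) * ((k + m : ℕ) : ℝ) - 2 := by
    intro m hm
    have := (hM m hm).2.2
    nlinarith
  -- `K * x` is a supersolution as soon as `2 * C ≤ K * δ`: since `4 ≤ x * δ`, the forcing
  -- `C * x` fits in the room `K * (x * δ - 2)` left by the homogeneous part.
  have hup : ∃ K, 0 < K ∧ ∀ m, M ≤ m → f m ≤ K * ((k + m : ℕ) : ℝ) := by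
    refine ⟨2 * C / δ + f M, by have := R.nonneg M; positivity, ?_⟩
    intro m hm
    induction m, hm using Nat.le_induction with
    | base =>
      have h2 := (hM M le_rfl).2.2
      have h3 := R.nonneg M
      have h4 : 0 < 2 * C / δ := by positivity
      nlinarith [mul_nonneg h4.le (by linarith : (0:ℝ) ≤ ((k + M : ℕ) : ℝ))]
    | succ m hm ih =>
      obtain ⟨⟨h1, _⟩, h2, h3⟩ := hM m hm
      have hz := hZ m hm
      set K := 2 * C / δ + f M with hK
      have hKC : 2 * C ≤ K * δ := by
        have : 2 * C / δ ≤ K := by have := R.nonneg M; linarith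
        exact (div_le_iff₀ hδ0).1 this
      have hK0 : 0 < K := by
        have := R.nonneg M; positivity
      rw [R.step m, size_succ]
      set x : ℝ := ((k + m : ℕ) : ℝ)
      set Z := (1 + α) * x - 2
      have h5 : 4 ≤ x * δ := (div_le_iff₀ hδ0).1 h2
      have h6 : (w * (K * x) + C * x) / Z ≤ K := by
        rw [div_le_iff₀ hz]
        have e : K * Z - w * (K * x) = K * (x * δ - 2) := by simp only [Z, hδ]; ring
        have : K * (x * δ / 2) ≤ K * (x * δ - 2) := by gcongr; linarith
        nlinarith
      calc (1 + w / Z) * f m + h m / Z ≤ (1 + w / Z) * (K * x) + C * x / Z := by gcongr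
        _ = K * x + (w * (K * x) + C * x) / Z := by ring
        _ ≤ _ := by linarith
  -- The increments of `f` are bounded below by the forcing, hence by `1 / (C * (1 + α))`. As `f M`
  -- may vanish, the comparison with `c * x` starts at `M + 1`.
  have hlow : ∃ c, 0 < c ∧ ∀ m, M + 1 ≤ m → c * ((k + m : ℕ) : ℝ) ≤ f m := by
    have hstep : ∀ m, M ≤ m → f m + 1 / (C * (1 + α)) ≤ f (m + 1) := by
      intro m hm
      obtain ⟨⟨_, h1⟩, h2, h3⟩ := hM m hm
      have hz := hZ m hm
      rw [R.step m]
      set x : ℝ := ((k + m : ℕ) : ℝ)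
      set Z := (1 + α) * x - 2
      have h7 : 1 / (C * (1 + α)) ≤ h m / Z := by
        rw [div_le_div_iff₀ (by positivity) hz]
        nlinarith
      have h8 : f m ≤ (1 + w / Z) * f m :=
        le_mul_of_one_le_left (R.nonneg m) (by have : 0 ≤ w / Z := by positivity
                                               linarith)
      linarith
    have hpos : 0 < f (M + 1) := by
      have := hstep M le_rfl
      have h1 := R.nonneg M
      have : 0 < 1 / (C * (1 + α)) := by positivity
      linarith
    have hx : (0 : ℝ) < ((k + (M + 1) : ℕ) : ℝ) := by
      have := (hM (M + 1) (by omega)).2.2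
      linarith
    refine ⟨min (1 / (C * (1 + α))) (f (M + 1) / ((k + (M + 1) : ℕ) : ℝ)), by positivity, ?_⟩
    intro m hm
    induction m, hm using Nat.le_induction with
    | base =>
      rw [← le_div_iff₀ hx]
      exact min_le_right _ _
    | succ m hm ih =>
      have := hstep m (by omega)
      rw [size_succ k m]
      have h9 := min_le_left (1 / (C * (1 + α))) (f (M + 1) / ((k + (M + 1) : ℕ) : ℝ))
      generalize min (1 / (C * (1 + α))) (f (M + 1) / ((k + (M + 1) : ℕ) : ℝ)) = c at *
      linarith
  obtain ⟨K, hK, hup⟩ := hup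
  obtain ⟨c, hc, hlow⟩ := hlow
  exact asympEquiv_trans_const hc hK (eventually_atTop.2 ⟨M, hup⟩)
    (eventually_atTop.2 ⟨M + 1, hlow⟩) (fun m => Nat.cast_nonneg _) (by intro m; simp [scale])

/-- The normalised sequences `f / (x - b) ^ a` and `f / (x - b + a - 1) ^ a`, where
`b = 2 / (1 + α)` and `a = w / (1 + α)`, have increments squeezed by the forcing term. -/
lemma recur_normalised (hα : 0 < α) (R : Recur α w k f h) {a : ℝ} (ha : a = w / (1 + α))
    (ha1 : 1 ≤ a) (hhn : ∀ᶠ m in atTop, 0 ≤ h m) :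
    ∃ u v : ℕ → ℝ, ∃ M : ℕ, ∃ c C : ℝ, 0 < c ∧ 0 < C ∧ ∀ m, M ≤ m →
      0 ≤ u m ∧ 0 ≤ v m ∧ f m ≤ u m * ((k + m : ℕ) : ℝ) ^ a ∧
      c * v m * ((k + m : ℕ) : ℝ) ^ a ≤ f m ∧
      u (m + 1) ≤ u m + C * (h m / (((k + m : ℕ) : ℝ) * ((k + m : ℕ) : ℝ) ^ a)) ∧
      v m + c * (h m / (((k + m : ℕ) : ℝ) * ((k + m : ℕ) : ℝ) ^ a)) ≤ v (m + 1) := by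
  set b : ℝ := 2 / (1 + α) with hb
  have hb2 : b ≤ 2 := by rw [hb]; exact (div_le_self (by norm_num) (by linarith))
  have hb0 : 0 < b := by rw [hb]; positivity
  -- With `y = x - b` the normalising constant is `(1 + α) * y` and the homogeneous factor is
  -- `1 + a / y`, to which `hom_upper` and `hom_lower` apply.
  obtain ⟨M, hM⟩ := eventually_atTop.1
    (hhn.and ((eventually_size_ge k 4).and (eventually_size_ge k a)))
  have hw : w = a * (1 + α) := by rw [ha]; field_simp
  refine ⟨fun m => f m / (((k + m : ℕ) : ℝ) - b) ^ a,
    fun m => f m / (((k + m : ℕ) : ℝ) - b + a - 1) ^ a, M,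
    min ((1 / 2 : ℝ) ^ a) (1 / ((1 + α) * 2 ^ a)), 2 * 2 ^ a, by positivity, by positivity, ?_⟩
  intro m hm
  obtain ⟨h1, h2, h3⟩ := hM m hm
  dsimp only
  rw [size_succ, R.step m]
  have hf := R.nonneg m
  set x : ℝ := ((k + m : ℕ) : ℝ)
  set c := min ((1 / 2 : ℝ) ^ a) (1 / ((1 + α) * 2 ^ a)) with hc
  have hc0 : 0 < c := by positivity
  have ha0 : 0 ≤ a := by linarith
  set y := x - b with hy
  have hy0 : 0 < y := by rw [hy]; linarith
  have hx0 : 0 < x := by linarith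
  have hZ : (1 + α) * x - 2 = (1 + α) * y := by rw [hy, hb]; field_simp
  have hwZ : w / ((1 + α) * x - 2) = a / y := by
    rw [hZ, hw]; field_simp
  rw [hwZ, hZ]
  have hya : 0 < y + a - 1 := by linarith
  refine ⟨by positivity, by positivity, ?_, ?_, ?_, ?_⟩
  · rw [div_mul_eq_mul_div, le_div_iff₀ (by positivity)]
    have : y ^ a ≤ x ^ a := by gcongr; linarith
    gcongr
  · have h5 : c * x ^ a ≤ (y + a - 1) ^ a := by
      calc c * x ^ a ≤ (1 / 2) ^ a * x ^ a := by
            gcongr; exact min_le_left _ _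
        _ = (1 / 2 * x) ^ a := by rw [Real.mul_rpow (by norm_num) hx0.le]
        _ ≤ _ := by
          gcongr; linarith
    calc c * (f m / (y + a - 1) ^ a) * x ^ a = f m / (y + a - 1) ^ a * (c * x ^ a) := by ring
      _ ≤ f m / (y + a - 1) ^ a * (y + a - 1) ^ a := by gcongr
      _ = f m := by field_simp
  · have e : x + 1 - b = y + 1 := by rw [hy]; ring
    rw [e, add_div]
    refine add_le_add ?_ ?_
    · rw [div_le_div_iff₀ (by positivity) (by positivity)]
      have := hom_upper ha1 hy0
      calc (1 + a / y) * f m * y ^ a = f m * ((1 + a / y) * y ^ a) := by ring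
        _ ≤ _ := by gcongr
    · rw [div_div, mul_div_assoc', div_le_div_iff₀ (by positivity) (by positivity)]
      have h6 : x * x ^ a ≤ 2 * 2 ^ a * ((1 + α) * y * (y + 1) ^ a) := by
        have h7 : x ^ a ≤ 2 ^ a * (y + 1) ^ a := by
          rw [← Real.mul_rpow (by norm_num) (by linarith)]
          gcongr; linarith
        have h8 : x ≤ 2 * ((1 + α) * y) := by nlinarith
        calc x * x ^ a ≤ (2 * ((1 + α) * y)) * (2 ^ a * (y + 1) ^ a) := by gcongr
          _ = _ := by ring
      calc h m * (x * x ^ a) ≤ h m * (2 * 2 ^ a * ((1 + α) * y * (y + 1) ^ a)) := by gcongr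
        _ = _ := by ring
  · have e : x + 1 - b + a - 1 = y + a := by rw [hy]; ring
    rw [e, add_div]
    have hya' : 0 < y + a := by linarith
    refine add_le_add ?_ ?_
    · rw [div_le_div_iff₀ (by positivity) (by positivity)]
      have := hom_lower ha1 hy0
      calc f m * (y + a) ^ a ≤ f m * ((1 + a / y) * (y + a - 1) ^ a) := by gcongr
        _ = _ := by ring
    · have h6 : c * ((1 + α) * y * (y + a) ^ a) ≤ x * x ^ a := by
        have h7 : (y + a) ^ a ≤ 2 ^ a * x ^ a := by
          rw [← Real.mul_rpow (by norm_num) (by linarith)]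
          gcongr; linarith
        calc c * ((1 + α) * y * (y + a) ^ a)
            ≤ 1 / ((1 + α) * 2 ^ a) * ((1 + α) * x * (2 ^ a * x ^ a)) := by
              gcongr
              · exact min_le_right _ _
              · linarith
          _ = _ := by field_simp
      rw [div_div, mul_div_assoc', div_le_div_iff₀ (by positivity) (by positivity)]
      calc c * h m * ((1 + α) * y * (y + a) ^ a)
          = h m * (c * ((1 + α) * y * (y + a) ^ a)) := by ring
        _ ≤ _ := by gcongr

lemma eventually_nonneg_of_asymp {β : ℝ} {g : ℕ} (hh : asympEquiv h (scale β g k)) :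
    ∀ᶠ m in atTop, 0 ≤ h m := by
  obtain ⟨C, hC, hh⟩ := hh
  filter_upwards [hh] with m hm
  by_contra hc
  push Not at hc
  nlinarith [scale_nonneg β g k m]

lemma eventually_pos_of_asymp {β : ℝ} {g : ℕ} (hh : asympEquiv h (scale β g k)) :
    ∀ᶠ m in atTop, 0 < h m := by
  obtain ⟨C, hC, hh⟩ := hh
  filter_upwards [hh, eventually_size_ge k 1, eventually_log_ge_one k] with m hm h1 h2
  by_contra hc
  push Not at hc
  have : 0 < scale β g k m := by
    unfold scale; positivity
  nlinarith

/-- Forcing of exponent smaller than the homogeneous exponent `a` does not change the order. -/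
lemma recur_homogeneous (hα : 0 < α) (R : Recur α w k f h) {a : ℝ} (ha : a = w / (1 + α))
    (ha1 : 1 ≤ a) {β : ℝ} {g : ℕ} (hβ : β < a) (hh : asympEquiv h (scale β g k)) :
    asympEquiv f (scale a 0 k) := by
  obtain ⟨u, v, M, c, C, hc, hC, H⟩ :=
    recur_normalised hα R ha ha1 (eventually_nonneg_of_asymp hh)
  have hpos := eventually_pos_of_asymp hh
  obtain ⟨D, hD, hh⟩ := hh
  -- An exponent `ρ` strictly between `β` and `a` absorbs the logarithms of the forcing, and the
  -- increments of `u` are then dominated by the summable sequence `x ^ (ρ - 1 - a)`.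
  obtain ⟨ρ, h1ρ, h2ρ⟩ := exists_between hβ
  obtain ⟨M', hM'⟩ := eventually_atTop.1 (hh.and (((scale_lt h1ρ g k).and
    (eventually_size_ge k 1)).and (hpos.and (eventually_ge_atTop M))))
  have hsum : Summable fun m : ℕ => ((k + m : ℕ) : ℝ) ^ (ρ - 1 - a) := by
    have := (summable_nat_add_iff k).2 (Real.summable_nat_rpow.2 (show ρ - 1 - a < -1 by linarith))
    simpa only [add_comm k] using this
  have hup : ∃ B, 0 < B ∧ ∀ m, M' ≤ m → u m ≤ B := by
    have hind : ∀ m, M' ≤ m → u m ≤ u M' + C * D * ∑ j ∈ Finset.range m,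
        ((k + j : ℕ) : ℝ) ^ (ρ - 1 - a) := by
      intro m hm
      induction m, hm using Nat.le_induction with
      | base =>
        have : 0 ≤ C * D * ∑ j ∈ Finset.range M', ((k + j : ℕ) : ℝ) ^ (ρ - 1 - a) := by
          positivity
        linarith
      | succ m hm ih =>
        obtain ⟨⟨h1, _⟩, ⟨h2, h3⟩, h4, h5⟩ := hM' m hm
        have h6 := (H m h5).2.2.2.2.1
        rw [Finset.sum_range_succ]
        have h7 : h m / (((k + m : ℕ) : ℝ) * ((k + m : ℕ) : ℝ) ^ a) ≤
            D * ((k + m : ℕ) : ℝ) ^ (ρ - 1 - a) := by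
          set x : ℝ := ((k + m : ℕ) : ℝ)
          have hx : 0 < x := by linarith
          rw [div_le_iff₀ (by positivity)]
          have e : x ^ (ρ - 1 - a) * (x * x ^ a) = x ^ ρ := by
            rw [← Real.rpow_one_add' hx.le (by linarith), ← Real.rpow_add hx]
            congr 1; ring
          rw [mul_assoc, e]
          exact h1.trans (by gcongr)
        have h8 := mul_le_mul_of_nonneg_left h7 hC.le
        linarith
    refine ⟨u M' + C * D * (∑' j : ℕ, ((k + j : ℕ) : ℝ) ^ (ρ - 1 - a)) + 1, ?_, ?_⟩
    · have := (H M' (hM' M' le_rfl).2.2.2).1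
      have : 0 ≤ ∑' j : ℕ, ((k + j : ℕ) : ℝ) ^ (ρ - 1 - a) :=
        tsum_nonneg fun j => by positivity
      positivity
    · intro m hm
      have h1 := hind m hm
      have h2 := hsum.sum_le_tsum (Finset.range m) (fun j _ => by positivity)
      have h3 := mul_le_mul_of_nonneg_left h2 (mul_pos hC hD).le
      linarith
  obtain ⟨B, hB, hup⟩ := hup
  -- The sequence `v` is nondecreasing, and positive after one step because the forcing is.
  have hv : ∀ m, M' + 1 ≤ m → v (M' + 1) ≤ v m := by
    intro m hm
    induction m, hm using Nat.le_induction with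
    | base => exact le_rfl
    | succ m hm ih =>
      obtain ⟨-, -, h4, h5⟩ := hM' m (by omega)
      have h6 := (H m h5).2.2.2.2.2
      have : 0 ≤ c * (h m / (((k + m : ℕ) : ℝ) * ((k + m : ℕ) : ℝ) ^ a)) := by positivity
      linarith
  have hv0 : 0 < v (M' + 1) := by
    obtain ⟨-, ⟨-, h3⟩, h4, h5⟩ := hM' M' le_rfl
    have h6 := (H M' h5).2.2.2.2.2
    have h7 := (H M' h5).2.1
    have : 0 < c * (h M' / (((k + M' : ℕ) : ℝ) * ((k + M' : ℕ) : ℝ) ^ a)) := by positivity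
    linarith
  refine asympEquiv_trans_const (φ := fun m => ((k + m : ℕ) : ℝ) ^ a)
    (c := c * v (M' + 1)) (C := B) (by positivity) hB
    (eventually_atTop.2 ⟨M', fun m hm => ?_⟩) (eventually_atTop.2 ⟨M' + 1, fun m hm => ?_⟩)
    (fun m => by positivity) (fun m => by simp [scale])
  · have := (H m (hM' m hm).2.2.2).2.2.1
    exact this.trans (by gcongr; exact hup m hm)
  · have := (H m (hM' m (by omega)).2.2.2).2.2.2.1
    refine le_trans ?_ this
    gcongr
    exact hv m hm

lemma pow_succ_sub_ge {s t : ℝ} (hs : 0 ≤ s) (hst : s ≤ t) (g : ℕ) :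
    s ^ g * (t - s) ≤ t ^ (g + 1) - s ^ (g + 1) := by
  have : s ^ g ≤ t ^ g := by gcongr
  have := mul_le_mul_of_nonneg_right this (hs.trans hst)
  rw [pow_succ, pow_succ]
  linarith

lemma pow_succ_sub_le {s t : ℝ} (hs : 0 ≤ s) (hst : s ≤ t) (g : ℕ) :
    t ^ (g + 1) - s ^ (g + 1) ≤ (g + 1) * t ^ g * (t - s) := by
  induction g with
  | zero => simp
  | succ g ih =>
    have h1 : s ^ (g + 1) ≤ t ^ (g + 1) := by gcongr
    have e : t ^ (g + 1 + 1) - s ^ (g + 1 + 1) =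
      t * (t ^ (g + 1) - s ^ (g + 1)) + s ^ (g + 1) * (t - s) := by ring
    rw [e]
    have h2 := mul_le_mul_of_nonneg_left ih (hs.trans hst)
    have h3 := mul_le_mul_of_nonneg_right h1 (sub_nonneg.2 hst)
    push_cast
    have e2 : t * ((g + 1) * t ^ g * (t - s)) = (g + 1) * t ^ (g + 1) * (t - s) := by ring
    rw [e2] at h2
    linarith

/-- Increments of powers of the logarithm: `(log x) ^ (g + 1)` is a discrete primitive of
`(log x) ^ g / x` up to constants. -/
lemma log_increment {x : ℝ} (hx : 2 ≤ x) (g : ℕ) :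
    Real.log x ^ g / x ≤ 2 * (Real.log (x + 1) ^ (g + 1) - Real.log x ^ (g + 1)) ∧
    Real.log (x + 1) ^ (g + 1) - Real.log x ^ (g + 1) ≤
      (g + 1) * 2 ^ g * (Real.log x ^ g / x) := by
  have hx0 : 0 < x := by linarith
  have hl : 0 ≤ Real.log x := Real.log_nonneg (by linarith)
  have hle : Real.log x ≤ Real.log (x + 1) := Real.log_le_log hx0 (by linarith)
  have hd : Real.log (x + 1) - Real.log x = Real.log ((x + 1) / x) := by
    rw [Real.log_div (by positivity) (by positivity)]
  have hd1 : Real.log (x + 1) - Real.log x ≤ 1 / x := by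
    rw [hd]
    refine (Real.log_le_sub_one_of_pos (by positivity)).trans (le_of_eq ?_)
    field_simp; ring
  have hd2 : 1 / (2 * x) ≤ Real.log (x + 1) - Real.log x := by
    rw [hd]
    refine le_trans ?_ (Real.one_sub_inv_le_log_of_pos (by positivity))
    rw [inv_div, one_sub_div (by positivity), div_le_div_iff₀ (by positivity) (by positivity)]
    nlinarith
  have h2 : Real.log (x + 1) ≤ 2 * Real.log x := by
    have : Real.log (x ^ 2) = 2 * Real.log x := by rw [Real.log_pow]; push_cast; ring
    rw [← this]
    exact Real.log_le_log (by positivity) (by nlinarith)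
  constructor
  · have h3 := pow_succ_sub_ge hl hle g
    have h4 : Real.log x ^ g * (1 / (2 * x)) ≤
      Real.log x ^ g * (Real.log (x + 1) - Real.log x) := by gcongr
    have e : Real.log x ^ g / x = 2 * (Real.log x ^ g * (1 / (2 * x))) := by field_simp
    rw [e]
    linarith
  · refine (pow_succ_sub_le hl hle g).trans ?_
    calc (g + 1) * Real.log (x + 1) ^ g * (Real.log (x + 1) - Real.log x)
        ≤ (g + 1) * (2 * Real.log x) ^ g * (1 / x) := by
          have h0 : 0 ≤ Real.log (x + 1) := hl.trans hle
          have h5 : 0 ≤ Real.log (x + 1) - Real.log x := by linarith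
          gcongr
      _ = _ := by rw [mul_pow]; ring

/-- Resonant forcing, of the same exponent as the homogeneous solution, produces one more power of
the logarithm. -/
lemma recur_resonant (hα : 0 < α) (R : Recur α w k f h) {a : ℝ} (ha : a = w / (1 + α))
    (ha1 : 1 ≤ a) {g : ℕ} (hh : asympEquiv h (scale a g k)) :
    asympEquiv f (scale a (g + 1) k) := by
  obtain ⟨u, v, M, c, C, hc, hC, H⟩ :=
    recur_normalised hα R ha ha1 (eventually_nonneg_of_asymp hh)
  have hpos := eventually_pos_of_asymp hh
  obtain ⟨D, hD, hh⟩ := hh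
  obtain ⟨M', hM'⟩ := eventually_atTop.1 (hh.and (((eventually_log_ge_one k).and
    (eventually_size_ge k 2)).and (hpos.and (eventually_ge_atTop M))))
  -- In resonance the powers `x ^ a` cancel: the increments of `u` and `v` are comparable to
  -- `(log x) ^ g / x`, which `log_increment` sums to `(log x) ^ (g + 1)`.
  have key : ∀ m, M' ≤ m → h m / (((k + m : ℕ) : ℝ) * ((k + m : ℕ) : ℝ) ^ a) ≤
        D * (Real.log ((k + m : ℕ) : ℝ) ^ g / ((k + m : ℕ) : ℝ)) ∧
      Real.log ((k + m : ℕ) : ℝ) ^ g / ((k + m : ℕ) : ℝ) ≤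
        D * (h m / (((k + m : ℕ) : ℝ) * ((k + m : ℕ) : ℝ) ^ a)) := by
    intro m hm
    obtain ⟨⟨h1, h2⟩, ⟨h3, h4⟩, -, -⟩ := hM' m hm
    unfold scale at h1 h2
    set x : ℝ := ((k + m : ℕ) : ℝ)
    have hx : 0 < x := by linarith
    constructor
    · rw [mul_div_assoc', div_le_div_iff₀ (by positivity) (by positivity)]
      calc h m * x ≤ D * (x ^ a * Real.log x ^ g) * x := by gcongr
        _ = _ := by ring
    · rw [mul_div_assoc', div_le_div_iff₀ (by positivity) (by positivity)]
      calc Real.log x ^ g * (x * x ^ a) = (x ^ a * Real.log x ^ g) * x := by ring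
        _ ≤ _ := by gcongr
  have hup : ∃ B, 0 < B ∧ ∀ m, M' ≤ m → u m ≤ B * Real.log ((k + m : ℕ) : ℝ) ^ (g + 1) := by
    have hu0 := (H M' (hM' M' le_rfl).2.2.2).1
    refine ⟨2 * (C * D) + u M', by positivity, fun m hm => ?_⟩
    induction m, hm using Nat.le_induction with
    | base =>
      have h1 : 1 ≤ Real.log ((k + M' : ℕ) : ℝ) ^ (g + 1) :=
        one_le_pow₀ (hM' M' le_rfl).2.1.1
      have : 0 < C * D := by positivity
      nlinarith
    | succ m hm ih =>
      obtain ⟨-, ⟨h3, h4⟩, -, h5⟩ := hM' m hm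
      have h6 := (H m h5).2.2.2.2.1
      have h7 := (log_increment h4 g).1
      have h8 := (key m hm).1
      rw [size_succ]
      set L := Real.log ((k + m : ℕ) : ℝ)
      set L' := Real.log (((k + m : ℕ) : ℝ) + 1)
      have h9 := mul_le_mul_of_nonneg_left h8 hC.le
      have h10 := mul_le_mul_of_nonneg_left h7 (mul_pos hC hD).le
      have h11 : 0 ≤ L' ^ (g + 1) - L ^ (g + 1) := by
        have : 0 ≤ L ^ g / ((k + m : ℕ) : ℝ) := by positivity
        linarith
      have := mul_nonneg hu0 h11
      nlinarith
  have hlow : ∃ c', 0 < c' ∧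
      ∀ m, M' + 1 ≤ m → c' * Real.log ((k + m : ℕ) : ℝ) ^ (g + 1) ≤ v m := by
    have hv0 : 0 < v (M' + 1) := by
      obtain ⟨-, ⟨-, h3⟩, h4, h5⟩ := hM' M' le_rfl
      have h6 := (H M' h5).2.2.2.2.2
      have h7 := (H M' h5).2.1
      have : 0 < c * (h M' / (((k + M' : ℕ) : ℝ) * ((k + M' : ℕ) : ℝ) ^ a)) := by positivity
      linarith
    have hl0 : 0 < Real.log ((k + (M' + 1) : ℕ) : ℝ) := by
      have := (hM' (M' + 1) (by omega)).2.1.1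
      linarith
    set c₁ := c / (D * ((g + 1) * 2 ^ g)) with hc₁
    refine ⟨min c₁ (v (M' + 1) / Real.log ((k + (M' + 1) : ℕ) : ℝ) ^ (g + 1)),
      by positivity, fun m hm => ?_⟩
    set c' := min c₁ (v (M' + 1) / Real.log ((k + (M' + 1) : ℕ) : ℝ) ^ (g + 1)) with hc'
    have hc'0 : 0 < c' := by positivity
    induction m, hm using Nat.le_induction with
    | base =>
      rw [← le_div_iff₀ (by positivity)]
      exact min_le_right _ _
    | succ m hm ih =>
      obtain ⟨-, ⟨h3, h4⟩, -, h5⟩ := hM' m (by omega)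
      have h6 := (H m h5).2.2.2.2.2
      have h7 := (log_increment h4 g).2
      have h8 := (key m (by omega)).2
      rw [size_succ]
      set L := Real.log ((k + m : ℕ) : ℝ)
      set L' := Real.log (((k + m : ℕ) : ℝ) + 1)
      have h9 : c' * (L' ^ (g + 1) - L ^ (g + 1)) ≤
          c * (h m / (((k + m : ℕ) : ℝ) * ((k + m : ℕ) : ℝ) ^ a)) := by
        have hm0 : 0 ≤ L ^ g / ((k + m : ℕ) : ℝ) := by positivity
        calc c' * (L' ^ (g + 1) - L ^ (g + 1))
            ≤ c₁ * ((g + 1) * 2 ^ g * (D * (h m / (((k + m : ℕ) : ℝ) *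
                ((k + m : ℕ) : ℝ) ^ a)))) := by
              refine (mul_le_mul_of_nonneg_left h7 hc'0.le).trans ?_
              gcongr
              exact min_le_left _ _
          _ = _ := by rw [hc₁]; field_simp
      linarith
  obtain ⟨B, hB, hup⟩ := hup
  obtain ⟨c', hc', hlow⟩ := hlow
  refine asympEquiv_trans_const (φ := scale a (g + 1) k) (c := c * c') (C := B)
    (by positivity) hB
    (eventually_atTop.2 ⟨M', fun m hm => ?_⟩) (eventually_atTop.2 ⟨M' + 1, fun m hm => ?_⟩)
    (fun m => scale_nonneg _ _ _ _) (fun m => rfl)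
  · have := (H m (hM' m hm).2.2.2).2.2.1
    refine this.trans ?_
    calc u m * ((k + m : ℕ) : ℝ) ^ a
        ≤ B * Real.log ((k + m : ℕ) : ℝ) ^ (g + 1) * ((k + m : ℕ) : ℝ) ^ a := by
          gcongr; exact hup m hm
      _ = _ := by unfold scale; ring
  · have := (H m (hM' m (by omega)).2.2.2).2.2.2.1
    refine le_trans ?_ this
    calc c * c' * scale a (g + 1) k m
        = c * (c' * Real.log ((k + m : ℕ) : ℝ) ^ (g + 1)) * ((k + m : ℕ) : ℝ) ^ a := by
          unfold scale; ring
      _ ≤ _ := by gcongr; exact hlow m hm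

end

/-! ### Injective homomorphisms and removal of a leaf -/

section Combinatorics

open Classical

/-- An injective graph homomorphism. Between a connected graph and an acyclic one this is the same
as a graph embedding, see `mono_adj`. -/
def IsMono {V W : Type} (τ : SimpleGraph V) (T : SimpleGraph W) (f : V → W) : Prop :=
  Function.Injective f ∧ ∀ a b, τ.Adj a b → T.Adj (f a) (f b)

/-- The observable `F_{(τ,ℓ)}(T)`, written as a finite sum over injective homomorphisms. -/
def msum {V W : Type} [Fintype V] [Fintype W] (τ : SimpleGraph V) (ℓ : V → ℕ)
    (T : SimpleGraph W) : ℝ :=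
  ∑ f : V → W, if IsMono τ T f then embWeight T ℓ f else 0

lemma embWeight_nonneg {V W : Type} [Fintype V] (T : SimpleGraph W) (ℓ : V → ℕ) (f : V → W) :
    0 ≤ embWeight T ℓ f := Finset.prod_nonneg fun _ _ => Nat.cast_nonneg _

lemma msum_nonneg {V W : Type} [Fintype V] [Fintype W] (τ : SimpleGraph V) (ℓ : V → ℕ)
    (T : SimpleGraph W) : 0 ≤ msum τ ℓ T := by
  refine Finset.sum_nonneg fun f _ => ?_
  split_ifs
  · exact embWeight_nonneg T ℓ f
  · exact le_rfl

/-- The path of `τ` joining `a` to `b` is mapped to a path of `T`, which by uniqueness of paths is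
the edge joining the images; so an injective homomorphism into an acyclic graph is induced. -/
lemma mono_adj {V W : Type} {τ : SimpleGraph V} {T : SimpleGraph W} (hτ : τ.Preconnected)
    (hT : T.IsAcyclic) {f : V → W} (hf : IsMono τ T f) {a b : V} (h : T.Adj (f a) (f b)) :
    τ.Adj a b := by
  let φ : τ →g T := ⟨f, fun h => hf.2 _ _ h⟩
  obtain ⟨p, hp⟩ := (hτ a b).exists_isPath
  have h1 : (p.map φ).IsPath := hp.map hf.1
  have h2 : (⟨p.map φ, h1⟩ : T.Path (f a) (f b)) = SimpleGraph.Path.singleton h :=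
    (hT.subsingleton_path _ _).elim _ _
  have h3 : (p.map φ) = h.toWalk := congrArg Subtype.val h2
  have hl : p.length = 1 := by
    rw [← SimpleGraph.Walk.length_map φ, h3]; rfl
  exact SimpleGraph.Walk.adj_of_length_eq_one hl

lemma obsG_eq_msum {V W : Type} [Fintype V] [Fintype W] {τ : SimpleGraph V} {T : SimpleGraph W}
    (hτ : τ.Preconnected) (hT : T.IsAcyclic) (ℓ : V → ℕ) : obsG τ ℓ T = msum τ ℓ T := by
  let e : (τ ↪g T) ≃ {f : V → W // IsMono τ T f} :=
    { toFun := fun φ => ⟨φ, φ.injective, fun a b h => φ.map_rel_iff.2 h⟩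
      invFun := fun f => ⟨⟨f.1, f.2.1⟩, fun {a b} =>
        ⟨fun h => mono_adj hτ hT f.2 h, fun h => f.2.2 _ _ h⟩⟩
      left_inv := fun φ => rfl
      right_inv := fun f => rfl }
  have : Fintype (τ ↪g T) := Fintype.ofEquiv _ e.symm
  rw [obsG, finsum_eq_sum_of_fintype, msum, ← Finset.sum_filter]
  rw [Finset.sum_subtype (p := fun f => IsMono τ T f) _ (by simp)]
  exact Fintype.sum_equiv e _ _ fun φ => rfl

/-- The graph obtained from `τ` by deleting the vertex `x`. -/
def red {V : Type} (τ : SimpleGraph V) (x : V) : SimpleGraph {v // v ≠ x} :=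
  τ.comap Subtype.val

/-- The map sending `x` to `w` and agreeing with `g` elsewhere. -/
def glue {V W : Type} (x : V) (w : W) (g : {v // v ≠ x} → W) : V → W :=
  fun j => if h : j = x then w else g ⟨j, h⟩

@[simp] lemma glue_self {V W : Type} (x : V) (w : W) (g : {v // v ≠ x} → W) :
    glue x w g x = w := by simp [glue]

@[simp] lemma glue_val {V W : Type} (x : V) (w : W) (g : {v // v ≠ x} → W) (b : {v // v ≠ x}) :
    glue x w g b.1 = g b := by simp [glue, b.2]

lemma sum_glue {V W : Type} [Fintype V] [Fintype W] (x : V) (Q : (V → W) → ℝ) :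
    ∑ f, Q f = ∑ g : {v // v ≠ x} → W, ∑ w, Q (glue x w g) := by
  rw [Finset.sum_comm, ← Fintype.sum_prod_type']
  refine Fintype.sum_equiv (Equiv.funSplitAt x W) _ _ fun f => ?_
  congr 1
  funext j
  by_cases h : j = x
  · subst h; simp [Equiv.funSplitAt, Equiv.piSplitAt]
  · simp [glue, h, Equiv.funSplitAt, Equiv.piSplitAt]

lemma isMono_glue {V W : Type} {τ : SimpleGraph V} {T : SimpleGraph W} {x : V} {w : W}
    {g : {v // v ≠ x} → W} :
    IsMono τ T (glue x w g) ↔ IsMono (red τ x) T g ∧ (∀ b, g b ≠ w) ∧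
      ∀ b : {v // v ≠ x}, τ.Adj x b → T.Adj w (g b) := by
  constructor
  · rintro ⟨h1, h2⟩
    refine ⟨⟨fun a b h => ?_, fun a b h => ?_⟩, fun b h => ?_, fun b h => ?_⟩
    · apply Subtype.ext
      apply h1
      simpa using h
    · simpa using h2 a.1 b.1 h
    · apply b.2
      apply h1
      simpa using h
    · simpa using h2 x b.1 h
  · rintro ⟨⟨h1, h2⟩, h3, h4⟩
    have key : ∀ a : V, a = x ∨ ∃ b : {v // v ≠ x}, a = b.1 := fun a =>
      (Classical.em (a = x)).imp id fun h => ⟨⟨a, h⟩, rfl⟩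
    refine ⟨fun a b h => ?_, fun a b h => ?_⟩
    · obtain rfl | ⟨a, rfl⟩ := key a <;> obtain hb | ⟨b, rfl⟩ := key b
      · exact hb.symm
      · simp only [glue_self, glue_val] at h; exact absurd h.symm (h3 b)
      · subst hb; simp only [glue_self, glue_val] at h; exact absurd h (h3 a)
      · simp only [glue_val] at h; rw [h1 h]
    · obtain rfl | ⟨a, rfl⟩ := key a <;> obtain hb | ⟨b, rfl⟩ := key b
      · subst hb; exact absurd h τ.irrefl
      · simpa using h4 b h
      · subst hb; simpa using (h4 a h.symm).symm
      · simpa using h2 a b h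

lemma embWeight_glue {V W : Type} [Fintype V] (T : SimpleGraph W) (ℓ : V → ℕ) (x : V) (w : W)
    (g : {v // v ≠ x} → W) :
    embWeight T ℓ (glue x w g) =
      ((degR T w - 1).descFactorial (ℓ x) : ℝ) * embWeight T (fun v : {v // v ≠ x} => ℓ v) g := by
  rw [embWeight, Fintype.prod_eq_mul_prod_subtype_ne _ x]
  simp [embWeight]

lemma red_adj {V : Type} {τ : SimpleGraph V} {x : V} (a b : {v // v ≠ x}) :
    (red τ x).Adj a b ↔ τ.Adj a b := Iff.rfl

lemma degR_card {V : Type} [Fintype V] (G : SimpleGraph V) (v : V) :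
    degR G v = (Finset.univ.filter fun w => G.Adj v w).card := by
  rw [degR, Nat.card_eq_fintype_card, Fintype.card_subtype]

lemma existsUnique_of_degR_one {V : Type} [Fintype V] {τ : SimpleGraph V} {x : V}
    (h : degR τ x = 1) : ∃ y : {v // v ≠ x}, ∀ b, τ.Adj x b ↔ b = y := by
  rw [degR_eq_degree, SimpleGraph.degree_eq_one_iff_existsUnique_adj] at h
  obtain ⟨y, hy, hu⟩ := h
  exact ⟨⟨y, hy.ne'⟩, fun b => ⟨fun h => hu b h, fun h => h ▸ hy⟩⟩

lemma isTree_red {V : Type} [Fintype V] {τ : SimpleGraph V} (hτ : τ.IsTree) {x : V}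
    (h : degR τ x = 1) : (red τ x).IsTree := by
  rw [degR_eq_degree] at h
  exact ⟨hτ.connected.induce_compl_singleton_of_degree_eq_one h,
    hτ.isAcyclic.comap ⟨Subtype.val, fun h => h⟩ Subtype.val_injective⟩

/-- Summing out the image of a loose leaf `x` attached to `y`: it may be any neighbour of the image
of `y` outside the image of the rest of the tree. -/
lemma msum_loose {V W : Type} [Fintype V] [Fintype W] {τ : SimpleGraph V} {T : SimpleGraph W}
    (hτ : τ.IsTree) (hT : T.IsAcyclic) {ℓ : V → ℕ} {x : V} (h0 : ℓ x = 0) (h1 : degR τ x = 1)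
    {y : {v // v ≠ x}} (hy : ∀ b, τ.Adj x b ↔ b = y) :
    msum τ ℓ T = ∑ g : {v // v ≠ x} → W, if IsMono (red τ x) T g then
      ((degR T (g y) : ℝ) - degR (red τ x) y) * embWeight T (fun v : {v // v ≠ x} => ℓ v) g
      else 0 := by
  rw [msum, sum_glue x]
  refine Finset.sum_congr rfl fun g _ => ?_
  simp only [isMono_glue, embWeight_glue, h0, Nat.descFactorial_zero, Nat.cast_one, one_mul]
  by_cases hg : IsMono (red τ x) T g
  swap
  · simp [hg]
  simp only [hg, true_and, if_true]
  have hcond : ∀ w, ((∀ b, g b ≠ w) ∧ ∀ b : {v // v ≠ x}, τ.Adj x b → T.Adj w (g b)) ↔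
      ((∀ b, g b ≠ w) ∧ T.Adj w (g y)) := by
    intro w
    refine and_congr_right fun _ => ⟨fun h => h y ((hy _).2 rfl), fun h b hb => ?_⟩
    rw [hy, ← Subtype.ext_iff] at hb
    rw [hb]; exact h
  simp only [hcond]
  rw [← Finset.sum_filter, Finset.sum_const, nsmul_eq_mul]
  congr 1
  rw [eq_sub_iff_add_eq, degR_card T, degR_card (red τ x)]
  rw [← Finset.card_filter_add_card_filter_not (s := Finset.univ.filter fun w => T.Adj (g y) w)
    (fun w => ∀ b, g b ≠ w)]
  push_cast
  have htr := isTree_red hτ h1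
  congr 2
  · congr 1
    ext w
    simp [T.adj_comm, and_comm]
  · rw [← Finset.card_image_of_injective _ hg.1]
    congr 1
    ext w
    simp only [Finset.mem_image, Finset.mem_filter, Finset.mem_univ, true_and]
    constructor
    · rintro ⟨b, hb, rfl⟩
      exact ⟨hg.2 _ _ hb, fun h => h b rfl⟩
    · rintro ⟨h2, h3⟩
      push Not at h3
      obtain ⟨b, rfl⟩ := h3
      exact ⟨b, mono_adj htr.connected.preconnected hT hg h2, rfl⟩

end Combinatorics

/-! ### The generator identity for observables -/

section Generator

open Classical

/-- The descending factorial as a real number. -/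
def df (a l : ℕ) : ℝ := (a.descFactorial l : ℝ)

lemma df_zero (a : ℕ) : df a 0 = 1 := by simp [df]

lemma df_zero_left {l : ℕ} (h : l ≠ 0) : df 0 l = 0 := by
  simp [df, Nat.descFactorial_eq_zero_iff_lt, Nat.pos_of_ne_zero h]

/-- The increment of a descending factorial, weighted by the attachment weight `d + α`. -/
lemma df_incr (α : ℝ) (d l : ℕ) :
    ((d : ℝ) + α) * df (d + 1) l =
      ((d : ℝ) + α) * df d l + (l * df d l + l * ((l : ℝ) - 1 + α) * df d (l - 1)) := by
  cases l with
  | zero => simp [df]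
  | succ j =>
    simp only [df, Nat.succ_descFactorial_succ, Nat.descFactorial_succ, Nat.add_sub_cancel]
    by_cases hj : j ≤ d
    · push_cast [hj]; ring
    · have : d.descFactorial j = 0 := Nat.descFactorial_eq_zero_iff_lt.2 (by omega)
      rw [this]; simp

/-- Splitting maps into the enlarged vertex set according to the preimage of the new vertex. -/
lemma sum_split_last {V : Type} [Fintype V] {n : ℕ} (Q : (V → Fin (n + 1)) → ℝ)
    (hQ : ∀ f, ¬ Function.Injective f → Q f = 0) :
    ∑ f, Q f = ∑ g : V → Fin n, Q (fun v => (g v).castSucc) +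
      ∑ x, ∑ g : {v // v ≠ x} → Fin n, Q (glue x (Fin.last n) fun v => (g v).castSucc) := by
  let e : (V → Fin n) ⊕ (Σ x : V, ({v // v ≠ x} → Fin n)) → (V → Fin (n + 1)) :=
    Sum.elim (fun g v => (g v).castSucc) fun p => glue p.1 (Fin.last n) fun v => (p.2 v).castSucc
  have he : Function.Injective e := by
    rintro (g | ⟨x, g⟩) (g' | ⟨x', g'⟩) h
    · congr 1; funext v
      exact Fin.castSucc_injective _ (congrFun h v)
    · have := congrFun h x'
      simp only [e, Sum.elim_inl, Sum.elim_inr, glue_self] at this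
      exact absurd this (Fin.castSucc_lt_last _).ne
    · have := congrFun h x
      simp only [e, Sum.elim_inl, Sum.elim_inr, glue_self] at this
      exact absurd this.symm (Fin.castSucc_lt_last _).ne
    · have hx : x = x' := by
        by_contra hne
        have := congrFun h x
        simp only [e, Sum.elim_inr, glue, hne, dif_neg, not_false_eq_true] at this
        exact absurd this.symm (Fin.castSucc_lt_last _).ne
      subst hx
      congr 2
      funext v
      have := congrFun h v.1
      simp only [e, Sum.elim_inr, glue_val] at this
      exact Fin.castSucc_injective _ this
  rw [← Fintype.sum_of_injective e he (fun p => Q (e p)) Q _ fun _ => rfl]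
  · rw [Fintype.sum_sum_type, Fintype.sum_sigma]
    rfl
  · intro f hf
    apply hQ
    intro hinj
    apply hf
    by_cases hx : ∃ x, f x = Fin.last n
    · obtain ⟨x, hx⟩ := hx
      have h : ∀ v : {v // v ≠ x}, f v ≠ Fin.last n := fun v hv => v.2 (hinj (hv.trans hx.symm))
      refine ⟨Sum.inr ⟨x, fun v => (f v).castPred (h v)⟩, ?_⟩
      funext v
      by_cases hv : v = x
      · subst hv; simp [e, hx]
      · simp [e, glue, hv]
    · push Not at hx
      refine ⟨Sum.inl fun v => (f v).castPred (hx v), ?_⟩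
      funext v
      simp [e]

lemma isMono_castSucc {V : Type} {τ : SimpleGraph V} {n : ℕ} {G : SimpleGraph (Fin n)} {u : Fin n}
    {g : V → Fin n} :
    IsMono τ (extendTree G u) (fun v => (g v).castSucc) ↔ IsMono τ G g := by
  simp only [IsMono, extend_adj_castSucc]
  exact and_congr_left fun _ => (Fin.castSucc_injective n).of_comp_iff g

/-- The product of descending factorials of the reduced degrees `d`, after `d u` has been raised by
one. -/
def bump {V : Type} [Fintype V] {n : ℕ} (d : Fin n → ℕ) (ℓ : V → ℕ) (u : Fin n)
    (g : V → Fin n) : ℝ := ∏ v, df (d (g v) + if g v = u then 1 else 0) (ℓ v)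

lemma embWeight_extend {V : Type} [Fintype V] {n : ℕ} {G : SimpleGraph (Fin n)}
    (hd : ∀ a, 1 ≤ degR G a) (u : Fin n) (ℓ : V → ℕ) (g : V → Fin n) :
    embWeight (extendTree G u) ℓ (fun v => (g v).castSucc) =
      bump (fun a => degR G a - 1) ℓ u g := by
  refine Finset.prod_congr rfl fun v _ => ?_
  rw [degR_extend_castSucc, df]
  have := hd (g v)
  dsimp only
  congr 2
  omega

/-- Decomposition of the observable of the enlarged tree. -/
lemma msum_extend {V : Type} [Fintype V] {n : ℕ} {G : SimpleGraph (Fin n)}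
    (hd : ∀ a, 1 ≤ degR G a) (τ : SimpleGraph V) (ℓ : V → ℕ) (u : Fin n) :
    msum τ ℓ (extendTree G u) =
      (∑ g : V → Fin n, if IsMono τ G g then bump (fun a => degR G a - 1) ℓ u g else 0) +
      ∑ x, ∑ g : {v // v ≠ x} → Fin n,
        if IsMono (red τ x) G g ∧ (∀ b : {v // v ≠ x}, τ.Adj x b → g b = u) then
          df 0 (ℓ x) * bump (fun a => degR G a - 1) (fun v : {v // v ≠ x} => ℓ v) u g else 0 := by
  rw [msum, sum_split_last]
  · congr 1
    · refine Finset.sum_congr rfl fun g _ => ?_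
      rw [isMono_castSucc, embWeight_extend hd]
    · refine Finset.sum_congr rfl fun x _ => Finset.sum_congr rfl fun g _ => ?_
      rw [isMono_glue, isMono_castSucc, embWeight_glue, embWeight_extend hd, degR_extend_last]
      have h1 : (∀ b, (g b).castSucc ≠ Fin.last n) := fun b => (Fin.castSucc_lt_last _).ne
      simp only [extend_adj_last, h1, ne_eq, not_false_eq_true, implies_true, true_and]
      rfl
  · intro f hf
    rw [if_neg]
    exact fun h => hf h.1

lemma bump_eq_self {V : Type} [Fintype V] {n : ℕ} (d : Fin n → ℕ) (ℓ : V → ℕ) {u : Fin n}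
    {g : V → Fin n} (h : ∀ v, g v ≠ u) : bump d ℓ u g = ∏ v, df (d (g v)) (ℓ v) := by
  simp [bump, h]

/-- The decoration `ℓ` lowered by one at the vertex `v`. It occurs only with a coefficient that
vanishes when `ℓ v = 0`, so the truncated subtraction is harmless. -/
def lower {V : Type} (ℓ : V → ℕ) (v : V) : V → ℕ := Function.update ℓ v (ℓ v - 1)

/-- The effect of attaching at a vertex in the image of `g`. -/
lemma bump_at {V : Type} [Fintype V] {n : ℕ} (α : ℝ) (d : Fin n → ℕ) (ℓ : V → ℕ)
    {g : V → Fin n} (hg : Function.Injective g) (v : V) :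
    ((d (g v) : ℝ) + α) * bump d ℓ (g v) g = ((d (g v) : ℝ) + α) * ∏ v, df (d (g v)) (ℓ v) +
      (ℓ v * ∏ v, df (d (g v)) (ℓ v) + ℓ v * ((ℓ v : ℝ) - 1 + α) *
        ∏ w, df (d (g w)) (lower ℓ v w)) := by
  simp only [bump]
  rw [Fintype.prod_eq_mul_prod_subtype_ne _ v, Fintype.prod_eq_mul_prod_subtype_ne _ v,
    Fintype.prod_eq_mul_prod_subtype_ne _ v]
  have h1 : ∀ i : {i // i ≠ v}, g i ≠ g v := fun i h => i.2 (hg h)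
  have h2 : ∀ i : {i // i ≠ v}, lower ℓ v i.1 = ℓ i := fun i =>
    Function.update_of_ne i.2 _ _
  have h3 : lower ℓ v v = ℓ v - 1 := Function.update_self ..
  simp only [h1, h2, h3, if_true, if_false, add_zero]
  linear_combination (∏ i : {i // i ≠ v}, df (d (g i)) (ℓ i)) * df_incr α (d (g v)) (ℓ v)

/-- The drift created by degree increments, for a fixed embedding `g`. -/
lemma sum_bump {V : Type} [Fintype V] {n : ℕ} (α : ℝ) (d : Fin n → ℕ) (ℓ : V → ℕ)
    {g : V → Fin n} (hg : Function.Injective g) :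
    ∑ u, ((d u : ℝ) + α) * bump d ℓ u g =
      (∑ u, ((d u : ℝ) + α)) * (∏ v, df (d (g v)) (ℓ v)) +
      ∑ v, (ℓ v * ∏ v, df (d (g v)) (ℓ v) + ℓ v * ((ℓ v : ℝ) - 1 + α) *
        ∏ w, df (d (g w)) (lower ℓ v w)) := by
  set P := ∏ v, df (d (g v)) (ℓ v) with hP
  have h : ∑ u, ((d u : ℝ) + α) * (bump d ℓ u g - P) =
      ∑ v, ((d (g v) : ℝ) + α) * (bump d ℓ (g v) g - P) := by
    refine (Fintype.sum_of_injective g hg _ _ (fun u hu => ?_) fun _ => rfl).symm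
    rw [bump_eq_self d ℓ (fun v h => hu ⟨v, h⟩), ← hP, sub_self, mul_zero]
  have h2 : ∀ v, ((d (g v) : ℝ) + α) * (bump d ℓ (g v) g - P) =
      (ℓ v * P + ℓ v * ((ℓ v : ℝ) - 1 + α) *
        ∏ w, df (d (g w)) (lower ℓ v w)) := by
    intro v
    rw [mul_sub, bump_at α d ℓ hg v, ← hP]
    ring
  rw [← Finset.sum_congr rfl fun v _ => h2 v, ← h, Finset.sum_mul, ← Finset.sum_add_distrib]
  exact Finset.sum_congr rfl fun u _ => by ring

/-- The number of loose leaves plus the total decoration: the weight of a decorated tree other than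
the undecorated trees with one or two vertices. -/
def lw {V : Type} [Fintype V] (τ : SimpleGraph V) (ℓ : V → ℕ) : ℕ :=
  (∑ v, ℓ v) + Nat.card {v // degR τ v = 1 ∧ ℓ v = 0}

/-- The contribution of the embeddings sending the vertex `x` of `τ` to the new vertex. -/
def newTerm {V : Type} [Fintype V] (α : ℝ) (τ : SimpleGraph V) (ℓ : V → ℕ) {n : ℕ}
    (G : SimpleGraph (Fin n)) (x : V) : ℝ :=
  ∑ u, ((degR G u : ℝ) - 1 + α) * ∑ g : {v // v ≠ x} → Fin n,
    if IsMono (red τ x) G g ∧ (∀ b : {v // v ≠ x}, τ.Adj x b → g b = u) then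
      df 0 (ℓ x) * bump (fun a => degR G a - 1) (fun v : {v // v ≠ x} => ℓ v) u g else 0

/-- The coefficient of `F_{τ ∖ x}` in the contribution of a loose leaf `x` attached to `y`. -/
def leafCoeff {V : Type} [Fintype V] (α : ℝ) (τ : SimpleGraph V) (ℓ : V → ℕ) {x : V}
    (y : {v // v ≠ x}) : ℝ := (degR (red τ x) y : ℝ) - 1 + ℓ y + α

/-- When the loose leaf `x` is sent to the new vertex, its neighbour `y` is sent to the attachment
vertex. The attachment weight of the latter is its number of neighbours available to `x`, which
rebuilds `F_τ` by `msum_loose`, plus the constant `degR (red τ x) y - 1 + α`; the correction in `ℓ y`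
comes from the degree increment. -/
lemma newTerm_leaf {V : Type} [Fintype V] (α : ℝ) {τ : SimpleGraph V} {ℓ : V → ℕ} {n : ℕ}
    {G : SimpleGraph (Fin n)} (hτ : τ.IsTree) (hG : G.IsTree) (hd : ∀ a, 1 ≤ degR G a) {x : V}
    (h1 : degR τ x = 1) (h0 : ℓ x = 0) {y : {v // v ≠ x}} (hy : ∀ b, τ.Adj x b ↔ b = y) :
    newTerm α τ ℓ G x = msum τ ℓ G +
      (leafCoeff α τ ℓ y * msum (red τ x) (fun v => ℓ v) G +
      ℓ y * ((ℓ y : ℝ) - 1 + α) *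
        msum (red τ x) (lower (fun v => ℓ v.1) y) G) := by
  have hm : ∀ m : {v // v ≠ x} → ℕ, msum (red τ x) m G =
      ∑ g : {v // v ≠ x} → Fin n, if IsMono (red τ x) G g then embWeight G m g else 0 := by
    intro m
    unfold msum
    congr!
  rw [msum_loose hτ hG.isAcyclic h0 h1 hy, hm, hm, newTerm]
  simp only [Finset.mul_sum]
  rw [Finset.sum_comm, ← Finset.sum_add_distrib, ← Finset.sum_add_distrib]
  refine Finset.sum_congr rfl fun g _ => ?_
  have hcond : ∀ u, (∀ b : {v // v ≠ x}, τ.Adj x b → g b = u) ↔ g y = u := by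
    intro u
    refine ⟨fun h => h y ((hy _).2 rfl), fun h b hb => ?_⟩
    rw [hy, ← Subtype.ext_iff] at hb
    rw [hb]; exact h
  simp only [hcond, h0, df_zero, one_mul]
  by_cases hg : IsMono (red τ x) G g
  swap
  · simp [hg]
  simp only [hg, true_and, if_true, mul_ite, mul_zero, Finset.sum_ite_eq, Finset.mem_univ]
  have hb := bump_at α (fun a => degR G a - 1) (fun v : {v // v ≠ x} => ℓ v) hg.1 y
  have hc : ((degR G (g y) - 1 : ℕ) : ℝ) = (degR G (g y) : ℝ) - 1 := by
    push_cast [hd (g y)]; ring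
  simp only [hc] at hb
  rw [hb]
  have e : ∀ m : {v // v ≠ x} → ℕ, embWeight G m g = ∏ v, df (degR G (g v) - 1) (m v) :=
    fun _ => rfl
  rw [e, e, leafCoeff]
  ring

/-- The new vertex has degree one, so it can only be the image of a loose leaf of `τ`. -/
lemma newTerm_zero {V : Type} [Fintype V] (α : ℝ) {τ : SimpleGraph V} {ℓ : V → ℕ} {n : ℕ}
    {G : SimpleGraph (Fin n)} (hτ : τ.IsTree)
    (hnb : ¬ (Fintype.card V ≤ 2 ∧ ∀ v, ℓ v = 0)) {x : V}
    (h : ¬ (degR τ x = 1 ∧ ℓ x = 0)) : newTerm α τ ℓ G x = 0 := by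
  refine Finset.sum_eq_zero fun u _ => ?_
  rw [Finset.sum_eq_zero, mul_zero]
  intro g _
  by_cases h0 : ℓ x = 0
  · rw [if_neg]
    rintro ⟨hg, hb⟩
    have h1 : degR τ x ≠ 1 := fun h1 => h ⟨h1, h0⟩
    have h2 : 2 ≤ Fintype.card V := by
      by_contra hlt
      have : Subsingleton V := Fintype.card_le_one_iff_subsingleton.1 (by omega)
      exact hnb ⟨by omega, fun v => Subsingleton.elim x v ▸ h0⟩
    have h3 : 1 < degR τ x := lt_of_le_of_ne (one_le_degR hτ.connected h2 x) h1.symm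
    rw [degR_card, Finset.one_lt_card] at h3
    obtain ⟨a, ha, b, hb', hne⟩ := h3
    simp only [Finset.mem_filter, Finset.mem_univ, true_and] at ha hb'
    have := hg.1 ((hb ⟨a, ha.ne'⟩ ha).trans (hb ⟨b, hb'.ne'⟩ hb').symm)
    exact hne (congrArg Subtype.val this)
  · rw [df_zero_left h0, zero_mul, ite_self]

/-- The forcing term of the recursion satisfied by `E[F_τ]`: a combination of observables of smaller
decorated trees. The neighbour of the loose leaf `x` is `y x`. -/
def forcing {V : Type} [Fintype V] (α : ℝ) (τ : SimpleGraph V) (ℓ : V → ℕ)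
    (y : ∀ x : {x // degR τ x = 1 ∧ ℓ x = 0}, {v // v ≠ x.1}) : Obs := fun _ G =>
  (∑ v, ℓ v * ((ℓ v : ℝ) - 1 + α) * msum τ (lower ℓ v) G) +
  ∑ x : {x // degR τ x = 1 ∧ ℓ x = 0},
    (leafCoeff α τ ℓ (y x) * msum (red τ x.1) (fun v => ℓ v) G +
      ℓ (y x) * ((ℓ (y x) : ℝ) - 1 + α) *
        msum (red τ x.1) (lower (fun v => ℓ v.1) (y x)) G)

/-- The action of the generator of the chain on an observable: `F_τ` is reproduced with the factor
`(1 + α) * n - 2 + w(τ)`, up to a combination of observables of smaller trees. The total decoration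
enters through the degree increments at the image of `τ`, and the number of loose leaves through
the embeddings that send a loose leaf to the new vertex. -/
lemma generator_msum {V : Type} [Fintype V] (α : ℝ) {τ : SimpleGraph V} {ℓ : V → ℕ}
    (hτ : τ.IsTree) (hnb : ¬ (Fintype.card V ≤ 2 ∧ ∀ v, ℓ v = 0))
    {y : ∀ x : {x // degR τ x = 1 ∧ ℓ x = 0}, {v // v ≠ x.1}}
    (hy : ∀ x b, τ.Adj x.1 b ↔ b = y x) {n : ℕ} {G : SimpleGraph (Fin n)} (hn : 2 ≤ n)
    (hG : G.IsTree) :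
    ∑ u, ((degR G u : ℝ) - 1 + α) * msum τ ℓ (extendTree G u) =
      ((1 + α) * (n : ℝ) - 2 + (lw τ ℓ : ℝ)) * msum τ ℓ G + forcing α τ ℓ y n G := by
  have hd : ∀ a, 1 ≤ degR G a := one_le_degR hG.connected (by simpa using hn)
  have hc : ∀ a, ((degR G a - 1 : ℕ) : ℝ) = (degR G a : ℝ) - 1 := fun a => by
    push_cast [hd a]; ring
  simp only [msum_extend hd, mul_add, Finset.sum_add_distrib]
  have hA : ∑ u, ((degR G u : ℝ) - 1 + α) *
      (∑ g : V → Fin n, if IsMono τ G g then bump (fun a => degR G a - 1) ℓ u g else 0) =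
      ((1 + α) * (n : ℝ) - 2 + ∑ v, (ℓ v : ℝ)) * msum τ ℓ G +
      ∑ v, ℓ v * ((ℓ v : ℝ) - 1 + α) * msum τ (lower ℓ v) G := by
    simp only [msum, Finset.mul_sum]
    rw [Finset.sum_comm, Finset.sum_comm (s := (Finset.univ : Finset V)),
      ← Finset.sum_add_distrib]
    refine Finset.sum_congr rfl fun g _ => ?_
    by_cases hg : IsMono τ G g
    swap
    · simp [hg]
    simp only [hg, if_true]
    have hb := sum_bump α (fun a => degR G a - 1) ℓ hg.1
    simp only [hc, sum_attach α hG] at hb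
    rw [hb, Finset.sum_add_distrib, ← Finset.sum_mul, ← add_assoc, ← add_mul]
    rfl
  have hB : ∑ u, ((degR G u : ℝ) - 1 + α) * (∑ x, ∑ g : {v // v ≠ x} → Fin n,
        if IsMono (red τ x) G g ∧ (∀ b : {v // v ≠ x}, τ.Adj x b → g b = u) then
          df 0 (ℓ x) * bump (fun a => degR G a - 1) (fun v : {v // v ≠ x} => ℓ v) u g else 0) =
      ∑ x : {x // degR τ x = 1 ∧ ℓ x = 0}, newTerm α τ ℓ G x.1 := by
    rw [Fintype.sum_of_injective (Subtype.val : {x // degR τ x = 1 ∧ ℓ x = 0} → V)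
      Subtype.val_injective _ (fun x => newTerm α τ ℓ G x) (fun x hx => ?_) fun _ => rfl]
    · simp only [newTerm]
      rw [Finset.sum_comm]
      exact Finset.sum_congr rfl fun u _ => by rw [Finset.mul_sum]
    · exact newTerm_zero α hτ hnb fun h => hx ⟨⟨x, h⟩, rfl⟩
  rw [hA, hB, Finset.sum_congr rfl fun x _ => newTerm_leaf α hτ hG hd x.2.1 x.2.2 (hy x),
    Finset.sum_add_distrib, Finset.sum_const, nsmul_eq_mul, forcing, lw, Finset.card_univ,
    Nat.card_eq_fintype_card]
  push_cast
  ring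

end Generator

/-! ### Weights of smaller trees and the induction -/

section Weights

open Classical

lemma lw_eq {V : Type} [Fintype V] (τ : SimpleGraph V) (ℓ : V → ℕ) :
    lw τ ℓ = (∑ v, ℓ v) + (Finset.univ.filter fun v => degR τ v = 1 ∧ ℓ v = 0).card := by
  rw [lw, Nat.card_eq_fintype_card, Fintype.card_subtype]

lemma weightG_le {V : Type} [Fintype V] (τ : SimpleGraph V) (ℓ : V → ℕ) {W : ℕ} (hW : 1 ≤ W)
    (h : lw τ ℓ ≤ W) : weightG τ ℓ ≤ W := by
  rw [weightG]
  split_ifs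
  · exact hW
  · exact h

lemma weightG_eq_lw {V : Type} [Fintype V] {τ : SimpleGraph V} {ℓ : V → ℕ}
    (h : ¬ (Fintype.card V ≤ 2 ∧ ∀ v, ℓ v = 0)) : weightG τ ℓ = lw τ ℓ := by
  rw [weightG, if_neg h]; rfl

lemma sum_lower {V : Type} [Fintype V] {ℓ : V → ℕ} {v : V} (hv : ℓ v ≠ 0) :
    (∑ u, lower ℓ v u) + 1 = ∑ u, ℓ u := by
  rw [← Finset.add_sum_erase _ _ (Finset.mem_univ v),
    ← Finset.add_sum_erase _ ℓ (Finset.mem_univ v)]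
  have h1 : ∑ u ∈ Finset.univ.erase v, lower ℓ v u = ∑ u ∈ Finset.univ.erase v, ℓ u :=
    Finset.sum_congr rfl fun u hu => Function.update_of_ne (Finset.ne_of_mem_erase hu) _ _
  have h2 : lower ℓ v v = ℓ v - 1 := Function.update_self ..
  rw [h1, h2]
  omega

/-- Lowering a decoration creates at most one new loose leaf. -/
lemma lw_lower_le {V : Type} [Fintype V] (τ : SimpleGraph V) {ℓ : V → ℕ} {v : V} (hv : ℓ v ≠ 0) :
    lw τ (lower ℓ v) ≤ lw τ ℓ := by
  rw [lw_eq, lw_eq, ← sum_lower hv]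
  have hs : (Finset.univ.filter fun u => degR τ u = 1 ∧ lower ℓ v u = 0) ⊆
      insert v (Finset.univ.filter fun u => degR τ u = 1 ∧ ℓ u = 0) := by
    intro u hu
    simp only [Finset.mem_filter, Finset.mem_univ, true_and, Finset.mem_insert] at hu ⊢
    by_cases h : u = v
    · exact Or.inl h
    · have : lower ℓ v u = ℓ u := Function.update_of_ne h _ _
      rw [this] at hu
      exact Or.inr hu
  have := (Finset.card_le_card hs).trans (Finset.card_insert_le _ _)
  omega

lemma sum_red {V : Type} [Fintype V] {ℓ : V → ℕ} {x : V} (h0 : ℓ x = 0) :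
    ∑ v : {v // v ≠ x}, ℓ v = ∑ v, ℓ v := by
  refine Fintype.sum_of_injective Subtype.val Subtype.val_injective _ _ (fun v hv => ?_)
    fun _ => rfl
  have : v = x := by
    by_contra h
    exact hv ⟨⟨v, h⟩, rfl⟩
  rw [this, h0]

lemma card_red {V : Type} [Fintype V] (x : V) :
    Fintype.card {v // v ≠ x} + 1 = Fintype.card V := by
  have : 0 < Fintype.card V := Fintype.card_pos_iff.2 ⟨x⟩
  rw [Fintype.card_subtype_compl, Fintype.card_subtype_eq]
  omega

/-- Removing a loose leaf `x` can turn only its neighbour into a new loose leaf. -/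
lemma lw_red_le {V : Type} [Fintype V] {τ : SimpleGraph V} {ℓ : V → ℕ} {x : V}
    (h1 : degR τ x = 1) (h0 : ℓ x = 0) {y : {v // v ≠ x}} (hy : ∀ b, τ.Adj x b ↔ b = y) :
    lw (red τ x) (fun v => ℓ v) ≤ lw τ ℓ := by
  rw [lw_eq, lw_eq, sum_red h0]
  have hdeg : ∀ v : {v // v ≠ x}, v ≠ y → degR (red τ x) v = degR τ v := by
    intro v hv
    rw [degR_card, degR_card, ← Finset.card_image_of_injective _ Subtype.val_injective]
    congr 1
    ext b
    simp only [Finset.mem_image, Finset.mem_filter, Finset.mem_univ, true_and, red_adj]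
    constructor
    · rintro ⟨b, hb, rfl⟩
      exact hb
    · intro hb
      refine ⟨⟨b, ?_⟩, hb, rfl⟩
      rintro rfl
      exact hv (Subtype.ext ((hy _).1 hb.symm))
  have hs : (Finset.univ.filter fun v : {v // v ≠ x} => degR (red τ x) v = 1 ∧ ℓ v = 0).image
      Subtype.val ⊆
      insert y.1 ((Finset.univ.filter fun u => degR τ u = 1 ∧ ℓ u = 0).erase x) := by
    intro u hu
    simp only [Finset.mem_image, Finset.mem_filter, Finset.mem_univ, true_and] at hu
    obtain ⟨v, ⟨hv1, hv2⟩, rfl⟩ := hu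
    simp only [Finset.mem_insert, Finset.mem_erase, Finset.mem_filter, Finset.mem_univ, true_and]
    by_cases h : v = y
    · exact Or.inl (congrArg _ h)
    · exact Or.inr ⟨v.2, hdeg v h ▸ hv1, hv2⟩
  have h := (Finset.card_le_card hs).trans (Finset.card_insert_le _ _)
  rw [Finset.card_image_of_injective _ Subtype.val_injective] at h
  have hx : x ∈ Finset.univ.filter fun u => degR τ u = 1 ∧ ℓ u = 0 := by simp [h1, h0]
  have := Finset.card_erase_add_one hx
  omega

/-- Outside the two undecorated trees with at most two vertices, a decorated tree has a positive
decoration or a loose leaf. -/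
lemma exists_smaller {V : Type} [Fintype V] {τ : SimpleGraph V} {ℓ : V → ℕ} (hτ : τ.IsTree)
    (hnb : ¬ (Fintype.card V ≤ 2 ∧ ∀ v, ℓ v = 0)) :
    (∃ v, ℓ v ≠ 0) ∨ ∃ x, degR τ x = 1 ∧ ℓ x = 0 := by
  by_cases h : ∃ v, ℓ v ≠ 0
  · exact Or.inl h
  · push Not at h
    have h3 : 2 < Fintype.card V := by
      by_contra hc
      exact hnb ⟨by omega, h⟩
    have : Nontrivial V := Fintype.one_lt_card_iff_nontrivial.1 (by omega)
    obtain ⟨x, hx⟩ := hτ.exists_vert_degree_one_of_nontrivial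
    exact Or.inr ⟨x, by rw [degR_eq_degree]; exact hx, h x⟩

lemma one_le_lw {V : Type} [Fintype V] {τ : SimpleGraph V} {ℓ : V → ℕ} (hτ : τ.IsTree)
    (hnb : ¬ (Fintype.card V ≤ 2 ∧ ∀ v, ℓ v = 0)) : 1 ≤ lw τ ℓ := by
  rw [lw_eq]
  rcases exists_smaller hτ hnb with ⟨v, hv⟩ | ⟨x, hx⟩
  · have := sum_lower hv
    omega
  · have : 0 < (Finset.univ.filter fun u => degR τ u = 1 ∧ ℓ u = 0).card :=
      Finset.card_pos.2 ⟨x, by simp [hx]⟩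
    omega

/-- The degree of `y` after the removal of `x` and the decoration of `y` vanish together only for the
undecorated edge, which is excluded. -/
lemma leafCoeff_pos {V : Type} [Fintype V] {α : ℝ} (hα : 0 < α) {τ : SimpleGraph V} {ℓ : V → ℕ}
    (hτ : τ.IsTree) (hnb : ¬ (Fintype.card V ≤ 2 ∧ ∀ v, ℓ v = 0)) {x : V}
    (h1 : degR τ x = 1) (h0 : ℓ x = 0) (y : {v // v ≠ x}) : 0 < leafCoeff α τ ℓ y := by
  have key : 1 ≤ degR (red τ x) y + ℓ y := by
    by_cases hc : 2 ≤ Fintype.card {v // v ≠ x}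
    · have := one_le_degR (isTree_red hτ h1).connected hc y
      omega
    · have hs : Subsingleton {v // v ≠ x} := Fintype.card_le_one_iff_subsingleton.1 (by omega)
      have hcV := card_red x
      by_contra hlt
      refine hnb ⟨by omega, fun v => ?_⟩
      by_cases hv : v = x
      · rw [hv, h0]
      · have : (⟨v, hv⟩ : {v // v ≠ x}) = y := Subsingleton.elim _ _
        rw [show v = y.1 from congrArg Subtype.val this]
        omega
  have : (1 : ℝ) ≤ (degR (red τ x) y : ℝ) + ℓ y := by exact_mod_cast key
  unfold leafCoeff
  linarith

lemma decCoeff_pos {α : ℝ} (hα : 0 < α) {l : ℕ} (hl : l ≠ 0) : 0 < (l : ℝ) * ((l : ℝ) - 1 + α) := by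
  have : (1 : ℝ) ≤ l := by exact_mod_cast Nat.one_le_iff_ne_zero.2 hl
  exact mul_pos (by linarith) (by linarith)

/-- The two undecorated trees with at most two vertices: the observable is `n` or `2n - 2`. -/
lemma msum_base {V : Type} [Fintype V] {τ : SimpleGraph V} {ℓ : V → ℕ} (hτ : τ.IsTree)
    (hc : Fintype.card V ≤ 2) (hℓ : ∀ v, ℓ v = 0) :
    (∀ (n : ℕ) (G : SimpleGraph (Fin n)), 2 ≤ n → G.IsTree → msum τ ℓ G = (n : ℝ)) ∨
    (∀ (n : ℕ) (G : SimpleGraph (Fin n)), 2 ≤ n → G.IsTree → msum τ ℓ G = 2 * (n : ℝ) - 2) := by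
  have hne : 0 < Fintype.card V := by
    have := hτ.connected.nonempty
    exact Fintype.card_pos
  have hw : ∀ {V : Type} [Fintype V] {ℓ : V → ℕ}, (∀ v, ℓ v = 0) → ∀ {n : ℕ}
      (G : SimpleGraph (Fin n)) (f : V → Fin n), embWeight G ℓ f = 1 := by
    intro V _ ℓ hℓ n G f
    simp [embWeight, hℓ]
  have hm : ∀ {V : Type} [Subsingleton V] {n : ℕ} (σ : SimpleGraph V) (G : SimpleGraph (Fin n))
      (f : V → Fin n), IsMono σ G f := by
    intro V _ n σ G f
    exact ⟨Function.injective_of_subsingleton f,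
      fun a b h => absurd (Subsingleton.elim a b) h.ne⟩
  by_cases h1 : Fintype.card V = 1
  · left
    intro n G hn hG
    have : Subsingleton V := Fintype.card_le_one_iff_subsingleton.1 h1.le
    simp [msum, hm, hw hℓ, h1]
  · right
    intro n G hn hG
    have : Nontrivial V := Fintype.one_lt_card_iff_nontrivial.1 (by omega)
    obtain ⟨x, hx⟩ := hτ.exists_vert_degree_one_of_nontrivial
    rw [← degR_eq_degree] at hx
    obtain ⟨y, hy⟩ := existsUnique_of_degR_one hx
    have hcx := card_red x
    have hs : Subsingleton {v // v ≠ x} := Fintype.card_le_one_iff_subsingleton.1 (by omega)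
    have hd : degR (red τ x) y = 0 := by
      rw [degR_card, Finset.card_eq_zero, Finset.filter_eq_empty_iff]
      exact fun b _ h => h.ne (Subsingleton.elim _ _)
    rw [msum_loose hτ hG.isAcyclic (hℓ x) hx hy]
    have hsum := sum_degR hG
    rw [Fintype.card_fin] at hsum
    have hu : Unique {v // v ≠ x} := ⟨⟨y⟩, fun b => Subsingleton.elim _ _⟩
    rw [← hsum]
    refine Fintype.sum_equiv (Equiv.funUnique {v // v ≠ x} (Fin n)) _ _ fun g => ?_
    rw [if_pos (hm _ _ _), hd, hw (ℓ := fun v : {v // v ≠ x} => ℓ v) fun v => hℓ v]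
    have : (Equiv.funUnique {v // v ≠ x} (Fin n)) g = g y := by
      simp only [Equiv.funUnique_apply]
      exact congrArg g (Subsingleton.elim _ _)
    rw [this]
    simp

end Weights

section Induction

open Classical

/-- The expectation of `Φ` has, uniformly in the seed, an order of growth `n ^ β (log n) ^ g` not
exceeding what is allowed for the forcing term in the recursion of a decorated tree of
weight `W`. -/
def Tame (α : ℝ) (W : ℕ) (Φ : Obs) : Prop :=
  ∃ (β : ℝ) (g : ℕ), 1 ≤ β ∧ β ≤ max 1 ((W : ℝ) / (1 + α)) ∧ ((W : ℝ) < 1 + α → g = 0) ∧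
    ∀ k, 2 ≤ k → ∀ S : SimpleGraph (Fin k), S.IsTree →
      asympEquiv (expect α Φ S) (scale β g k)

/-- Tame or identically zero on trees. -/
def WTame (α : ℝ) (W : ℕ) (Φ : Obs) : Prop :=
  (∀ (n : ℕ) (G : SimpleGraph (Fin n)), 2 ≤ n → G.IsTree → Φ n G = 0) ∨ Tame α W Φ

variable {α : ℝ} {W : ℕ}

lemma Tame.congr (hα : 0 < α) {Φ Ψ : Obs} (h : Tame α W Φ)
    (e : ∀ (n : ℕ) (G : SimpleGraph (Fin n)), 2 ≤ n → G.IsTree → Φ n G = Ψ n G) :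
    Tame α W Ψ := by
  obtain ⟨β, g, h1, h2, h3, h4⟩ := h
  refine ⟨β, g, h1, h2, h3, fun k hk S hS => ?_⟩
  have : expect α Ψ S = expect α Φ S := funext fun m => (expect_congr hα hk hS e m).symm
  rw [this]
  exact h4 k hk S hS

lemma Tame.add (hα : 0 < α) {Φ Ψ : Obs} (h : Tame α W Φ) (h' : Tame α W Ψ) :
    Tame α W (fun n G => Φ n G + Ψ n G) := by
  obtain ⟨β, g, h1, h2, h3, h4⟩ := h
  obtain ⟨β', g', h1', h2', h3', h4'⟩ := h'
  have tri : (β' < β ∨ (β' = β ∧ g' ≤ g)) ∨ (β < β' ∨ (β = β' ∧ g ≤ g')) := by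
    rcases lt_trichotomy β' β with h | h | h
    · exact Or.inl (Or.inl h)
    · rcases le_total g' g with hg | hg
      · exact Or.inl (Or.inr ⟨h, hg⟩)
      · exact Or.inr (Or.inr ⟨h.symm, hg⟩)
    · exact Or.inr (Or.inl h)
  rcases tri with h | h
  · refine ⟨β, g, h1, h2, h3, fun k hk S hS => ?_⟩
    rw [show expect α (fun n G => Φ n G + Ψ n G) S = fun m => expect α Φ S m + expect α Ψ S m from
      funext fun m => expect_add hα hk hS Φ Ψ m]
    exact asympEquiv_add (h4 k hk S hS) (h4' k hk S hS) (scale_nonneg _ _ _) (scale_le h k)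
  · refine ⟨β', g', h1', h2', h3', fun k hk S hS => ?_⟩
    rw [show expect α (fun n G => Φ n G + Ψ n G) S = fun m => expect α Ψ S m + expect α Φ S m from
      funext fun m => (expect_add hα hk hS Φ Ψ m).trans (add_comm _ _)]
    exact asympEquiv_add (h4' k hk S hS) (h4 k hk S hS) (scale_nonneg _ _ _) (scale_le h k)

lemma Tame.smul {Φ : Obs} (h : Tame α W Φ) {c : ℝ} (hc : 0 < c) :
    Tame α W (fun n G => c * Φ n G) := by
  obtain ⟨β, g, h1, h2, h3, h4⟩ := h
  refine ⟨β, g, h1, h2, h3, fun k hk S hS => ?_⟩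
  rw [show expect α (fun n G => c * Φ n G) S = fun m => c * expect α Φ S m from
    funext fun m => expect_smul c Φ m]
  exact asympEquiv_smul (h4 k hk S hS) hc (scale_nonneg _ _ _)

lemma Tame.add_wtame (hα : 0 < α) {Φ Ψ : Obs} (h : Tame α W Φ) (h' : WTame α W Ψ) :
    Tame α W (fun n G => Φ n G + Ψ n G) := by
  rcases h' with h' | h'
  · exact h.congr hα fun n G hn hG => by rw [h' n G hn hG, add_zero]
  · exact h.add hα h'

lemma WTame.add_tame (hα : 0 < α) {Φ Ψ : Obs} (h : WTame α W Φ) (h' : Tame α W Ψ) :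
    Tame α W (fun n G => Φ n G + Ψ n G) :=
  (h'.add_wtame hα h).congr hα fun _ _ _ _ => add_comm _ _

lemma WTame.add (hα : 0 < α) {Φ Ψ : Obs} (h : WTame α W Φ) (h' : WTame α W Ψ) :
    WTame α W (fun n G => Φ n G + Ψ n G) := by
  rcases h with h | h
  · rcases h' with h' | h'
    · exact Or.inl fun n G hn hG => by simp [h n G hn hG, h' n G hn hG]
    · exact Or.inr (WTame.add_tame hα (Or.inl h) h')
  · exact Or.inr (h.add_wtame hα h')

lemma WTame.sum (hα : 0 < α) {ι : Type} {Φ : ι → Obs} (s : Finset ι)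
    (h : ∀ i, WTame α W (Φ i)) : WTame α W (fun n G => ∑ i ∈ s, Φ i n G) := by
  induction s using Finset.induction_on with
  | empty => exact Or.inl fun n G _ _ => by simp
  | insert a s ha ih =>
    simp only [Finset.sum_insert ha]
    exact (h a).add hα ih

lemma Tame.sum (hα : 0 < α) {ι : Type} [Fintype ι] {Φ : ι → Obs} (h : ∀ i, WTame α W (Φ i))
    {i : ι} (hi : Tame α W (Φ i)) : Tame α W (fun n G => ∑ i, Φ i n G) :=
  (hi.add_wtame hα (WTame.sum hα (Finset.univ.erase i) h)).congr hα fun n G _ _ =>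
    Finset.add_sum_erase _ (fun i => Φ i n G) (Finset.mem_univ i)

/-- The asymptotics of the expected observable, for one decorated tree. -/
def MainClaim {V : Type} [Fintype V] (α : ℝ) (τ : SimpleGraph V) (ℓ : V → ℕ) : Prop :=
  ∃ g : ℕ, ((weightG τ ℓ : ℝ) < 1 + α → g = 0) ∧
    ∀ k, 2 ≤ k → ∀ S : SimpleGraph (Fin k), S.IsTree →
      asympEquiv (expect α (fun _ G => msum τ ℓ G) S)
        (scale (max 1 ((weightG τ ℓ : ℝ) / (1 + α))) g k)

lemma tame_of_mainClaim (hα : 0 < α) {V : Type} [Fintype V] {τ : SimpleGraph V} {ℓ : V → ℕ}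
    (h : MainClaim α τ ℓ) (hW : 1 ≤ W) (hw : lw τ ℓ ≤ W) :
    Tame α W (fun _ G => msum τ ℓ G) := by
  obtain ⟨g, h1, h2⟩ := h
  have hle : (weightG τ ℓ : ℝ) ≤ W := by exact_mod_cast weightG_le τ ℓ hW hw
  refine ⟨_, g, le_max_left _ _, max_le_max le_rfl ?_, fun h => h1 (by linarith), h2⟩
  gcongr

lemma mainClaim_base (hα : 0 < α) {V : Type} [Fintype V] {τ : SimpleGraph V} {ℓ : V → ℕ}
    (hτ : τ.IsTree) (hb : Fintype.card V ≤ 2 ∧ ∀ v, ℓ v = 0) : MainClaim α τ ℓ := by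
  have hw : weightG τ ℓ = 1 := by rw [weightG, if_pos hb]
  refine ⟨0, fun _ => rfl, fun k hk S hS => ?_⟩
  have hmax : max 1 (((1 : ℕ) : ℝ) / (1 + α)) = 1 := by
    refine max_eq_left ?_
    rw [div_le_one (by linarith)]
    push_cast
    linarith
  rw [hw, hmax]
  refine ⟨2, by norm_num, Eventually.of_forall fun m => ?_⟩
  have h2 : (2 : ℝ) ≤ ((k + m : ℕ) : ℝ) := by exact_mod_cast (by omega : 2 ≤ k + m)
  simp only [scale, Real.rpow_one, pow_zero, mul_one]
  rcases msum_base hτ hb.1 hb.2 with h | h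
  · rw [expect_const hα hk hS h m]
    constructor <;> linarith
  · rw [expect_const hα hk hS (g := fun n => 2 * (n : ℝ) - 2) h m]
    constructor <;> linarith

/-- The forcing term is a nonnegative combination of observables of smaller decorated trees whose
weights do not exceed that of `τ`, and at least one coefficient is positive. -/
lemma forcing_tame (hα : 0 < α) {V : Type} [Fintype V] {τ : SimpleGraph V} {ℓ : V → ℕ}
    (hτ : τ.IsTree) (hnb : ¬ (Fintype.card V ≤ 2 ∧ ∀ v, ℓ v = 0))
    {y : ∀ x : {x // degR τ x = 1 ∧ ℓ x = 0}, {v // v ≠ x.1}}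
    (hy : ∀ x b, τ.Adj x.1 b ↔ b = y x)
    (ih : ∀ {V' : Type} [Fintype V'] {σ : SimpleGraph V'} {m : V' → ℕ}, σ.IsTree →
      Fintype.card V' + ∑ v, m v < Fintype.card V + ∑ v, ℓ v → MainClaim α σ m) :
    Tame α (lw τ ℓ) (forcing α τ ℓ y) := by
  have hW := one_le_lw hτ hnb
  have hA : ∀ v, ℓ v ≠ 0 → Tame α (lw τ ℓ) fun _ G =>
      ℓ v * ((ℓ v : ℝ) - 1 + α) * msum τ (lower ℓ v) G := by
    intro v hv
    have := sum_lower hv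
    exact (tame_of_mainClaim hα (ih hτ (by omega)) hW (lw_lower_le τ hv)).smul (decCoeff_pos hα hv)
  have hA' : ∀ v, WTame α (lw τ ℓ) fun _ G =>
      ℓ v * ((ℓ v : ℝ) - 1 + α) * msum τ (lower ℓ v) G := by
    intro v
    by_cases hv : ℓ v = 0
    · exact Or.inl fun n G _ _ => by simp [hv]
    · exact Or.inr (hA v hv)
  have hB : ∀ x : {x // degR τ x = 1 ∧ ℓ x = 0}, Tame α (lw τ ℓ) fun _ G =>
      leafCoeff α τ ℓ (y x) * msum (red τ x.1) (fun v => ℓ v) G +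
      ℓ (y x) * ((ℓ (y x) : ℝ) - 1 + α) *
        msum (red τ x.1) (lower (fun v => ℓ v.1) (y x)) G := by
    intro x
    have hr := isTree_red hτ x.2.1
    have hlw := lw_red_le x.2.1 x.2.2 (hy x)
    have hs := sum_red x.2.2
    have hc := card_red x.1
    refine ((tame_of_mainClaim hα (ih hr ?_) hW hlw).smul
      (leafCoeff_pos hα hτ hnb x.2.1 x.2.2 (y x))).add_wtame hα ?_
    · omega
    · by_cases h0 : ℓ (y x) = 0
      · exact Or.inl fun n G _ _ => by simp [h0]
      · have hsl := sum_lower (ℓ := fun v : {v // v ≠ x.1} => ℓ v) (v := y x) h0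
        exact Or.inr ((tame_of_mainClaim hα (ih hr (by omega)) hW
          ((lw_lower_le (red τ x.1) (ℓ := fun v : {v // v ≠ x.1} => ℓ v) h0).trans hlw)).smul
          (decCoeff_pos hα h0))
  rcases exists_smaller hτ hnb with ⟨v, hv⟩ | ⟨x, hx⟩
  · exact (Tame.sum hα hA' (hA v hv)).add_wtame hα
      (WTame.sum hα Finset.univ fun x => Or.inr (hB x))
  · exact (WTame.sum hα Finset.univ hA').add_tame hα
      (Tame.sum hα (fun x => Or.inr (hB x)) (hB ⟨x, hx⟩))

/-- The induction step compares the order of the forcing term with that of the homogeneous solution,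
`n ^ (w / (1 + α))`. The exponent of the logarithm grows, by one, exactly when they resonate. -/
lemma mainClaim_step (hα : 0 < α) {V : Type} [Fintype V] {τ : SimpleGraph V} {ℓ : V → ℕ}
    (hτ : τ.IsTree) (hnb : ¬ (Fintype.card V ≤ 2 ∧ ∀ v, ℓ v = 0))
    (ih : ∀ {V' : Type} [Fintype V'] {σ : SimpleGraph V'} {m : V' → ℕ}, σ.IsTree →
      Fintype.card V' + ∑ v, m v < Fintype.card V + ∑ v, ℓ v → MainClaim α σ m) :
    MainClaim α τ ℓ := by
  choose y hy using fun x : {x // degR τ x = 1 ∧ ℓ x = 0} => existsUnique_of_degR_one x.2.1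
  obtain ⟨β, g, hβ1, hβ2, hg, hF⟩ := forcing_tame hα hτ hnb hy ih
  rw [MainClaim, weightG_eq_lw hnb]
  have hR : ∀ k, 2 ≤ k → ∀ S : SimpleGraph (Fin k), S.IsTree → Recur α (lw τ ℓ : ℝ) k
      (expect α (fun _ G => msum τ ℓ G) S) (expect α (forcing α τ ℓ y) S) := by
    intro k hk S hS
    exact ⟨fun m => expect_nonneg (fun n G => msum_nonneg τ ℓ G) m,
      fun m => expect_succ hα hk hS (fun n G hn hG => generator_msum α hτ hnb hy hn hG) m⟩
  have h1α : 0 < 1 + α := by linarith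
  by_cases hw : (lw τ ℓ : ℝ) < 1 + α
  · have hmax : max 1 ((lw τ ℓ : ℝ) / (1 + α)) = 1 :=
      max_eq_left ((div_le_one h1α).2 hw.le)
    rw [hmax] at hβ2 ⊢
    obtain rfl : β = 1 := le_antisymm hβ2 hβ1
    obtain rfl := hg hw
    exact ⟨0, fun _ => rfl, fun k hk S hS =>
      recur_linear hα (Nat.cast_nonneg _) (hR k hk S hS) hw (hF k hk S hS)⟩
  · have ha1 : 1 ≤ (lw τ ℓ : ℝ) / (1 + α) := (one_le_div h1α).2 (not_lt.1 hw)
    rw [max_eq_right ha1] at hβ2 ⊢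
    rcases hβ2.lt_or_eq with hlt | rfl
    · exact ⟨0, fun _ => rfl, fun k hk S hS =>
        recur_homogeneous hα (hR k hk S hS) rfl ha1 hlt (hF k hk S hS)⟩
    · exact ⟨g + 1, fun h => absurd h hw, fun k hk S hS =>
        recur_resonant hα (hR k hk S hS) rfl ha1 (hF k hk S hS)⟩

/-- Induction on the number of vertices plus the total decoration, which drops both when a decoration
is lowered and when a loose leaf is removed. -/
lemma mainClaim (hα : 0 < α) : ∀ (N : ℕ) {V : Type} [Fintype V] {τ : SimpleGraph V} {ℓ : V → ℕ},
    τ.IsTree → Fintype.card V + ∑ v, ℓ v ≤ N → MainClaim α τ ℓ := by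
  intro N
  induction N with
  | zero =>
    intro V _ τ ℓ hτ hN
    have := hτ.connected.nonempty
    have : 0 < Fintype.card V := Fintype.card_pos
    omega
  | succ N ih =>
    intro V _ τ ℓ hτ hN
    by_cases hb : Fintype.card V ≤ 2 ∧ ∀ v, ℓ v = 0
    · exact mainClaim_base hα hτ hb
    · exact mainClaim_step hα hτ hb fun hσ hlt => ih hσ (by omega)

end Induction

/-- **Theorem 3.4.** For every `α > 0` there is a nonnegative exponent
`γ(τ)` depending only on `τ` (and `α`), equal to `0` when `w(τ) < 1+α`, such that for every
seed `S` of size `k ≥ 2`, `E[F_τ(T_n^S)] ≈ n^{max(1, w(τ)/(1+α))}·(log n)^{γ(τ)}`. -/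
theorem first_moment_asymptotics (α : ℝ) (hα : 0 < α) :
    ∃ γ : DecTree → ℝ,
      (∀ τ, 0 ≤ γ τ) ∧
      (∀ τ, (τ.wt : ℝ) < 1 + α → γ τ = 0) ∧
      ∀ τ : DecTree, τ.tree.IsTree →
        ∀ (k : ℕ), 2 ≤ k → ∀ S : SimpleGraph (Fin k), S.IsTree →
          asympEquiv (fun m => ∫ G, τ.obs G ∂paLaw α S m)
            (fun m =>
              ((k + m : ℕ) : ℝ) ^ (max 1 ((τ.wt : ℝ) / (1 + α))) *
                Real.log ((k + m : ℕ) : ℝ) ^ γ τ) := by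
  classical
  have H : ∀ τ : DecTree, ∃ g : ℕ, ((τ.wt : ℝ) < 1 + α → g = 0) ∧ (τ.tree.IsTree →
      ∀ k, 2 ≤ k → ∀ S : SimpleGraph (Fin k), S.IsTree →
        asympEquiv (expect α (fun _ G => msum τ.tree τ.dec G) S)
          (scale (max 1 ((τ.wt : ℝ) / (1 + α))) g k)) := by
    intro τ
    by_cases hτ : τ.tree.IsTree
    · obtain ⟨g, h1, h2⟩ := mainClaim hα _ (ℓ := τ.dec) hτ le_rfl
      exact ⟨g, h1, fun _ => h2⟩
    · exact ⟨0, fun _ => rfl, fun h => absurd h hτ⟩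
  choose g h1 h2 using H
  refine ⟨fun τ => g τ, fun τ => Nat.cast_nonneg _, fun τ h => by simp [h1 τ h],
    fun τ hτ k hk S hS => ?_⟩
  have e : (fun m => ∫ G, τ.obs G ∂paLaw α S m) =
      expect α (fun _ G => msum τ.tree τ.dec G) S :=
    funext fun m => expect_congr hα hk hS (Φ := fun _ G => τ.obs G)
      (fun n G _ hG => obsG_eq_msum hτ.connected.preconnected hG.isAcyclic τ.dec) m
  rw [e]
  simp only [Real.rpow_natCast]
  exact h2 τ hτ k hk S hS

end AffinePA
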